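/- arXiv:1611.03532 — 3 statements merged into one kernel-verified Lean document; each statement's English description precedes it below -/
import Mathlib

section
/- Let N ≥ 2, 0 < R₀ < R₁, p ∈ (1,∞), and let s₁, s₂ satisfy √(R₁² − R₀²) ≤ s₁ < s₂ ≤ R₁ + R₀. Then Ω_{s₁} is a proper subset of Ω_{s₂}, and λ₁(p, Ω_{s₂}) < λ₁(p, Ω_{s₁}). Consequently s ↦ λ₁(p, Ω_s) is strictly decreasing on [√(R₁² − R₀²), R₁ + R₀]. -/
open MeasureTheory Metric Set Filter
open scoped RealInnerProductSpace ENNReal Topology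

/-- The first Dirichlet eigenvalue of the p-Laplacian on `Ω`, defined variationally as the
infimum of Rayleigh quotients of smooth, not identically zero functions with compact
support contained in `Ω`. -/
noncomputable def lam1 {N : ℕ} (p : ℝ) (Ω : Set (EuclideanSpace ℝ (Fin N))) : ℝ :=
  sInf { r : ℝ | ∃ u : EuclideanSpace ℝ (Fin N) → ℝ,
    ContDiff ℝ (⊤ : ℕ∞) u ∧ u ≠ 0 ∧ HasCompactSupport u ∧ tsupport u ⊆ Ω ∧
    r = (∫ x in Ω, ‖gradient u x‖ ^ p) / (∫ x in Ω, |u x| ^ p) }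

/-- The first standard basis vector `e₁` of `ℝ^N`. -/
noncomputable def e1 (N : ℕ) : EuclideanSpace ℝ (Fin N) :=
  (WithLp.equiv 2 (Fin N → ℝ)).symm (fun i => if (i : ℕ) = 0 then 1 else 0)

/-- The eccentric annulus `Ω_s = B_{R₁}(0) \ closure (B_{R₀}(s e₁))`. -/
noncomputable def Om (N : ℕ) (R₀ R₁ s : ℝ) : Set (EuclideanSpace ℝ (Fin N)) :=
  ball 0 R₁ \ closure (ball (s • e1 N) R₀)

/-- `u` is a first eigenfunction of the p-Laplacian on `Ω` with eigenvalue `lam`: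
C¹ on an open set containing the closure of `Ω`, positive in `Ω`, zero on `∂Ω`, and a weak
solution of `−Δ_p u = lam · u^{p−1}`. -/
def IsFirstEigenfunction {N : ℕ} (p : ℝ) (Ω : Set (EuclideanSpace ℝ (Fin N)))
    (lam : ℝ) (u : EuclideanSpace ℝ (Fin N) → ℝ) : Prop :=
  (∃ V : Set (EuclideanSpace ℝ (Fin N)), IsOpen V ∧ closure Ω ⊆ V ∧ ContDiffOn ℝ 1 u V) ∧
  (∀ x ∈ Ω, 0 < u x) ∧
  (∀ x ∈ frontier Ω, u x = 0) ∧
  (∀ φ : EuclideanSpace ℝ (Fin N) → ℝ, ContDiff ℝ (⊤ : ℕ∞) φ → HasCompactSupport φ →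
    tsupport φ ⊆ Ω →
    ∫ x in Ω, ‖gradient u x‖ ^ (p - 2) * ⟪gradient u x, gradient φ x⟫ =
      lam * ∫ x in Ω, (u x) ^ (p - 1) * φ x)

section helpers

abbrev EN (N : ℕ) := EuclideanSpace ℝ (Fin N)

lemma norm_gradient_eq {N : ℕ} (u : EN N → ℝ) (x : EN N) :
    ‖gradient u x‖ = ‖fderiv ℝ u x‖ := by
  simp [gradient]

lemma int_grad {N : ℕ} {p : ℝ} (hp : 1 < p) {u : EN N → ℝ} (hu : ContDiff ℝ (⊤ : ℕ∞) u)
    (hc : HasCompactSupport u) : Integrable (fun x => ‖fderiv ℝ u x‖ ^ p) := by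
  refine Continuous.integrable_of_hasCompactSupport ?_ ?_
  · exact (hu.continuous_fderiv (by simp)).norm.rpow_const (fun _ => Or.inr (by linarith))
  · exact (hc.fderiv (𝕜 := ℝ)).comp_left (g := fun L => ‖L‖ ^ p)
      (by simp [Real.zero_rpow (by linarith : p ≠ 0)])

lemma int_fun {N : ℕ} {p : ℝ} (hp : 1 < p) {u : EN N → ℝ} (hu : Continuous u)
    (hc : HasCompactSupport u) : Integrable (fun x => |u x| ^ p) := by
  refine Continuous.integrable_of_hasCompactSupport ?_ ?_
  · exact hu.abs.rpow_const (fun _ => Or.inr (by linarith))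
  · exact hc.comp_left (g := fun L => |L| ^ p)
      (by simp [Real.zero_rpow (by linarith : p ≠ 0)])

lemma setInt_grad {N : ℕ} {p : ℝ} (hp : 1 < p) {u : EN N → ℝ} {Ω : Set (EN N)}
    (hs : tsupport u ⊆ Ω) : ∫ x in Ω, ‖gradient u x‖ ^ p = ∫ x, ‖fderiv ℝ u x‖ ^ p := by
  simp_rw [norm_gradient_eq]
  refine setIntegral_eq_integral_of_forall_compl_eq_zero (fun x hx => ?_)
  have : fderiv ℝ u x = 0 := by
    have := mt (fun h => (support_fderiv_subset ℝ (f := u)) h) (fun h => hx (hs h))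
    simpa using this
  simp [this, Real.zero_rpow (by linarith : p ≠ 0)]

lemma setInt_fun {N : ℕ} {p : ℝ} (hp : 1 < p) {u : EN N → ℝ} {Ω : Set (EN N)}
    (hs : tsupport u ⊆ Ω) : ∫ x in Ω, |u x| ^ p = ∫ x, |u x| ^ p := by
  refine setIntegral_eq_integral_of_forall_compl_eq_zero (fun x hx => ?_)
  have : u x = 0 := image_eq_zero_of_notMem_tsupport (fun h => hx (hs h))
  simp [this, Real.zero_rpow (by linarith : p ≠ 0)]

lemma int_fun_pos {N : ℕ} {p : ℝ} (hp : 1 < p) {u : EN N → ℝ} (hu : Continuous u)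
    (hc : HasCompactSupport u) (h0 : u ≠ 0) : 0 < ∫ x, |u x| ^ p := by
  obtain ⟨x, hx⟩ := Function.ne_iff.mp h0
  refine integral_pos_of_integrable_nonneg_nonzero (x := x) ?_ (int_fun hp hu hc) ?_ ?_
  · exact hu.abs.rpow_const (fun _ => Or.inr (by linarith))
  · intro x; positivity
  · exact (Real.rpow_pos_of_pos (abs_pos.mpr hx) p).ne'

lemma lam1_bdd {N : ℕ} (p : ℝ) (Ω : Set (EN N)) : BddBelow { r : ℝ | ∃ u : EuclideanSpace ℝ (Fin N) → ℝ,
    ContDiff ℝ (⊤ : ℕ∞) u ∧ u ≠ 0 ∧ HasCompactSupport u ∧ tsupport u ⊆ Ω ∧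
    r = (∫ x in Ω, ‖gradient u x‖ ^ p) / (∫ x in Ω, |u x| ^ p) } := by
  refine ⟨0, ?_⟩
  rintro r ⟨u, -, -, -, -, rfl⟩
  exact div_nonneg (integral_nonneg fun x => by positivity) (integral_nonneg fun x => by positivity)

lemma lam1_nonneg {N : ℕ} (p : ℝ) (Ω : Set (EN N)) : 0 ≤ lam1 p Ω := by
  refine Real.sInf_nonneg ?_
  rintro r ⟨u, -, -, -, -, rfl⟩
  exact div_nonneg (integral_nonneg fun x => by positivity) (integral_nonneg fun x => by positivity)

lemma rayleigh {N : ℕ} {p : ℝ} (hp : 1 < p) {Ω : Set (EN N)} {u : EN N → ℝ}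
    (hu : ContDiff ℝ (⊤ : ℕ∞) u) (hc : HasCompactSupport u) (hs : tsupport u ⊆ Ω) :
    lam1 p Ω * ∫ x, |u x| ^ p ≤ ∫ x, ‖fderiv ℝ u x‖ ^ p := by
  by_cases h0 : u = 0
  · subst h0
    simp [Real.zero_rpow (by linarith : p ≠ 0)]
  have hpos := int_fun_pos hp hu.continuous hc h0
  rw [← le_div_iff₀ hpos]
  refine csInf_le (lam1_bdd p Ω) ⟨u, hu, h0, hc, hs, ?_⟩
  rw [setInt_grad hp hs, setInt_fun hp hs]

lemma rayleigh_inf {N : ℕ} {p : ℝ} (hp : 1 < p) {Ω : Set (EN N)} (ho : IsOpen Ω)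
    (hne : Ω.Nonempty) {l : ℝ} (hl : lam1 p Ω < l) : ∃ u : EN N → ℝ,
    ContDiff ℝ (⊤ : ℕ∞) u ∧ u ≠ 0 ∧ HasCompactSupport u ∧ tsupport u ⊆ Ω ∧
    ∫ x, ‖fderiv ℝ u x‖ ^ p < l * ∫ x, |u x| ^ p := by
  obtain ⟨x, hx⟩ := hne
  obtain ⟨r, hr, hrs⟩ := Metric.nhds_basis_closedBall.mem_iff.mp (ho.mem_nhds hx)
  let b : ContDiffBump x := ⟨r / 2, r, by positivity, by linarith⟩
  have hne : { r : ℝ | ∃ u : EuclideanSpace ℝ (Fin N) → ℝ,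
    ContDiff ℝ (⊤ : ℕ∞) u ∧ u ≠ 0 ∧ HasCompactSupport u ∧ tsupport u ⊆ Ω ∧
    r = (∫ x in Ω, ‖gradient u x‖ ^ p) / (∫ x in Ω, |u x| ^ p) }.Nonempty := by
    refine ⟨_, b, b.contDiff, ?_, b.hasCompactSupport, ?_, rfl⟩
    · intro h
      have h1 : b x = 1 := b.one_of_mem_closedBall (mem_closedBall_self b.rIn_pos.le)
      rw [h] at h1; simp at h1
    · rw [b.tsupport_eq]; exact hrs
  obtain ⟨r, ⟨u, hu, h0, hc, hs, rfl⟩, hlt⟩ := exists_lt_of_csInf_lt hne hl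
  refine ⟨u, hu, h0, hc, hs, ?_⟩
  rw [setInt_grad hp hs, setInt_fun hp hs, div_lt_iff₀ (int_fun_pos hp hu.continuous hc h0)] at hlt
  exact hlt

/-- near-minimizers that are nonnegative and normalised -/
lemma near_min {N : ℕ} {p : ℝ} (hp : 1 < p) {Ω : Set (EN N)} (ho : IsOpen Ω)
    (hne : Ω.Nonempty) {l : ℝ} (hl : lam1 p Ω < l) : ∃ u : EN N → ℝ,
    ContDiff ℝ (⊤ : ℕ∞) u ∧ (∀ x, 0 ≤ u x) ∧ HasCompactSupport u ∧ tsupport u ⊆ Ω ∧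
    ∫ x, |u x| ^ p = 1 ∧ ∫ x, ‖fderiv ℝ u x‖ ^ p ≤ l := by
  obtain ⟨u, hu, h0, hc, hs, hlt⟩ := rayleigh_inf hp ho hne hl
  have hp0 : p ≠ 0 := by linarith
  let v : ℝ → EN N → ℝ := fun κ x => Real.sqrt (u x ^ 2 + κ ^ 2) - κ
  have hv0 : ∀ κ > 0, ∀ x, 0 ≤ v κ x := by
    intro κ hκ x
    have : κ ≤ Real.sqrt (u x ^ 2 + κ ^ 2) := Real.le_sqrt_of_sq_le (by nlinarith [sq_nonneg (u x)])
    simp only [v]; linarith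
  have hvu : ∀ κ > 0, ∀ x, v κ x ≤ |u x| := by
    intro κ hκ x
    have : Real.sqrt (u x ^ 2 + κ ^ 2) ≤ |u x| + κ := by
      rw [Real.sqrt_le_left (by positivity)]
      nlinarith [sq_abs (u x), abs_nonneg (u x)]
    simp only [v]; linarith
  have hlim : Tendsto (fun κ => ∫ x, |v κ x| ^ p) (𝓝[>] 0) (𝓝 (∫ x, |u x| ^ p)) := by
    refine tendsto_integral_filter_of_dominated_convergence (fun x => |u x| ^ p) ?_ ?_
      (int_fun hp hu.continuous hc) ?_
    · refine Eventually.of_forall (fun κ => ?_)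
      have : Continuous (fun x => |v κ x| ^ p) := by
        have := hu.continuous
        refine Continuous.rpow_const ?_ (fun _ => Or.inr (by linarith))
        simp only [v]; fun_prop
      exact this.aestronglyMeasurable
    · filter_upwards [self_mem_nhdsWithin] with κ hκ
      refine Eventually.of_forall (fun x => ?_)
      rw [Real.norm_of_nonneg (by positivity)]
      refine Real.rpow_le_rpow (abs_nonneg _) ?_ (by linarith)
      rw [abs_of_nonneg (hv0 κ hκ x)]; exact hvu κ hκ x
    · refine Eventually.of_forall (fun x => ?_)
      refine Tendsto.mono_left ?_ nhdsWithin_le_nhds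
      have : Continuous (fun κ => |v κ x| ^ p) := by
        refine Continuous.rpow_const ?_ (fun _ => Or.inr (by linarith))
        simp only [v]; fun_prop
      have h := this.tendsto 0
      simpa [v, Real.sqrt_sq_eq_abs] using h
  have hlim2 := (hlim.const_mul l).eventually (lt_mem_nhds hlt)
  obtain ⟨κ, hκ2, hκ⟩ := (hlim2.and self_mem_nhdsWithin).exists
  have hκ : 0 < κ := hκ
  have hpos : ∀ x, 0 < u x ^ 2 + κ ^ 2 := fun x => by positivity
  have hvs : ContDiff ℝ (⊤ : ℕ∞) (v κ) := by
    refine ContDiff.sub (ContDiff.sqrt ?_ (fun x => (hpos x).ne')) contDiff_const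
    exact (hu.pow 2).add contDiff_const
  have hsupp : tsupport (v κ) ⊆ tsupport u := by
    refine closure_mono (fun x hx => ?_)
    intro h
    apply hx
    simp [v, h, Real.sqrt_sq hκ.le]
  have hvc : HasCompactSupport (v κ) := hc.of_isClosed_subset (isClosed_tsupport _) hsupp
  have hd : ∀ x, ‖fderiv ℝ (v κ) x‖ ≤ ‖fderiv ℝ u x‖ := by
    intro x
    have h1 : HasFDerivAt u (fderiv ℝ u x) x := (hu.differentiable (by simp) x).hasFDerivAt
    have h2 := (((h1.pow 2).add_const (κ ^ 2)).sqrt (hpos x).ne').sub_const κ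
    have h3 : fderiv ℝ (v κ) x = _ := h2.fderiv
    rw [h3, norm_smul, norm_smul]
    simp only [Nat.add_one_sub_one, pow_one]
    rw [← mul_assoc]
    refine mul_le_of_le_one_left (norm_nonneg _) ?_
    have hs0 : 0 < Real.sqrt (u x ^ 2 + κ ^ 2) := Real.sqrt_pos.mpr (hpos x)
    have : |u x| ≤ Real.sqrt (u x ^ 2 + κ ^ 2) := Real.abs_le_sqrt (by nlinarith)
    rw [← norm_mul, Real.norm_eq_abs]
    have : (1 / (2 * Real.sqrt (u x ^ 2 + κ ^ 2)) * (2 • u x)) = u x / Real.sqrt (u x ^ 2 + κ ^ 2) := by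
      simp only [nsmul_eq_mul]; push_cast; field_simp
    rw [this, abs_div, abs_of_pos hs0, div_le_one hs0]
    assumption
  have hle : ∫ x, ‖fderiv ℝ (v κ) x‖ ^ p ≤ ∫ x, ‖fderiv ℝ u x‖ ^ p :=
    integral_mono (int_grad hp hvs hvc) (int_grad hp hu hc)
      (fun x => Real.rpow_le_rpow (norm_nonneg _) (hd x) (by linarith))
  have hl0 : 0 < l := (lam1_nonneg p Ω).trans_lt hl
  have hI : 0 < ∫ x, |v κ x| ^ p := by
    have : 0 < l * ∫ x, |v κ x| ^ p := lt_of_le_of_lt (integral_nonneg fun x => by positivity) hκ2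
    exact (pos_iff_pos_of_mul_pos this).mp hl0
  set I := ∫ x, |v κ x| ^ p with hIdef
  set c : ℝ := I ^ (-(1 / p)) with hcdef
  have hc0 : 0 < c := Real.rpow_pos_of_pos hI _
  have hcp : c ^ p = I⁻¹ := by
    rw [hcdef, ← Real.rpow_mul hI.le, ← Real.rpow_neg_one]; congr 1; field_simp
  have hsub : tsupport (fun x => c * v κ x) ⊆ tsupport (v κ) := by
    refine closure_mono (fun x hx => ?_)
    intro h
    apply hx
    simp [h]
  refine ⟨fun x => c * v κ x, contDiff_const.mul hvs, fun x => mul_nonneg hc0.le (hv0 κ hκ x),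
    hvc.of_isClosed_subset (isClosed_tsupport _) hsub, hsub.trans (hsupp.trans hs), ?_, ?_⟩
  · simp_rw [abs_mul, Real.mul_rpow (abs_nonneg _) (abs_nonneg _), abs_of_pos hc0]
    rw [integral_const_mul, hcp]
    exact inv_mul_cancel₀ hI.ne'
  · have : ∀ x, ‖fderiv ℝ (fun x => c * v κ x) x‖ ^ p = c ^ p * ‖fderiv ℝ (v κ) x‖ ^ p := by
      intro x
      rw [fderiv_const_mul (hvs.differentiable (by simp) x), norm_smul,
        Real.mul_rpow (norm_nonneg _) (norm_nonneg _), Real.norm_of_nonneg hc0.le]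
    simp_rw [this]
    rw [integral_const_mul, hcp, inv_mul_le_iff₀ hI, mul_comm I l]
    linarith

lemma hidden_convex {F : Type*} [NormedAddCommGroup F] [NormedSpace ℝ F] {p : ℝ} (hp : 1 < p)
    {U H t : ℝ} (hU : 0 < U) (hH : 0 < H) (ht : 0 < t) (a b : F) :
    ‖(U ^ p + t * H ^ p) ^ (1 / p - 1) • (U ^ (p - 1) • a + (t * H ^ (p - 1)) • b)‖ ^ p
      ≤ ‖a‖ ^ p + t * ‖b‖ ^ p := by
  have hUp : 0 < U ^ p := Real.rpow_pos_of_pos hU p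
  have hHp : 0 < H ^ p := Real.rpow_pos_of_pos hH p
  set S := U ^ p + t * H ^ p with hS
  have hS0 : 0 < S := by positivity
  have hA : ‖a‖ / U ∈ Ici (0 : ℝ) := mem_Ici.2 (by positivity)
  have hB : ‖b‖ / H ∈ Ici (0 : ℝ) := mem_Ici.2 (by positivity)
  have hα : 0 ≤ U ^ p / S := by positivity
  have hβ : 0 ≤ t * H ^ p / S := by positivity
  have hconv := (convexOn_rpow hp.le).2 hA hB hα hβ
    (by rw [← add_div, ← hS, div_self hS0.ne'])
  simp only [smul_eq_mul] at hconv
  have e1 : S ^ (1 / p - 1) = S ^ (1 / p) / S := by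
    rw [Real.rpow_sub hS0, Real.rpow_one]
  have e2 : U ^ (p - 1) = U ^ p / U := by rw [Real.rpow_sub hU, Real.rpow_one]
  have e3 : H ^ (p - 1) = H ^ p / H := by rw [Real.rpow_sub hH, Real.rpow_one]
  have hn : ‖S ^ (1 / p - 1) • (U ^ (p - 1) • a + (t * H ^ (p - 1)) • b)‖ ≤
      S ^ (1 / p) * (U ^ p / S * (‖a‖ / U) + t * H ^ p / S * (‖b‖ / H)) := by
    have h1 : ‖U ^ (p - 1) • a + (t * H ^ (p - 1)) • b‖ ≤
        U ^ (p - 1) * ‖a‖ + (t * H ^ (p - 1)) * ‖b‖ := by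
      refine (norm_add_le _ _).trans_eq ?_
      rw [norm_smul, norm_smul, Real.norm_of_nonneg (by positivity),
        Real.norm_of_nonneg (by positivity)]
    rw [norm_smul, Real.norm_of_nonneg (by positivity)]
    refine (mul_le_mul_of_nonneg_left h1 (by positivity)).trans_eq ?_
    rw [e1, e2, e3]; field_simp
  refine (Real.rpow_le_rpow (norm_nonneg _) hn (by linarith)).trans ?_
  rw [Real.mul_rpow (by positivity) (by positivity), ← Real.rpow_mul hS0.le,
    one_div_mul_cancel (by linarith), Real.rpow_one]
  refine (mul_le_mul_of_nonneg_left hconv hS0.le).trans_eq ?_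
  rw [Real.div_rpow (norm_nonneg _) hU.le, Real.div_rpow (norm_nonneg _) hH.le]
  field_simp

lemma hidden_deficit {F : Type*} [NormedAddCommGroup F] [NormedSpace ℝ F] {p : ℝ} (hp : 1 < p)
    {u κ δ : ℝ} (hu : 0 ≤ u) (hκ : 0 < κ) (hκδ : κ ≤ δ) (hδ : δ ≤ 1) (a : F) :
    ‖((u + κ) ^ p + δ ^ p * (1 + κ) ^ p) ^ (1 / p - 1) • ((u + κ) ^ (p - 1) • a)‖ ^ p
      + min 1 (p - 1) * δ ^ p * (‖a‖ / (u + 3 * δ)) ^ p ≤ ‖a‖ ^ p := by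
  have hδ0 : 0 < δ := by linarith
  have hU : 0 < u + κ := by linarith
  have hH : 0 < 1 + κ := by linarith
  have hUp : 0 < (u + κ) ^ p := Real.rpow_pos_of_pos hU p
  have hHp : 0 < (1 + κ) ^ p := Real.rpow_pos_of_pos hH p
  have hHp1 : 1 ≤ (1 + κ) ^ p := Real.one_le_rpow (by linarith) (by linarith)
  have hδp : 0 < δ ^ p := Real.rpow_pos_of_pos hδ0 p
  set S := (u + κ) ^ p + δ ^ p * (1 + κ) ^ p with hS
  have hS0 : 0 < S := by positivity
  have hSle : S ≤ (u + 3 * δ) ^ p := by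
    have h1 : (u + κ) ^ p + (δ * (1 + κ)) ^ p ≤ ((u + κ) + δ * (1 + κ)) ^ p :=
      Real.add_rpow_le_rpow_add hU.le (by positivity) hp.le
    rw [Real.mul_rpow hδ0.le hH.le] at h1
    refine h1.trans (Real.rpow_le_rpow (by positivity) ?_ (by linarith))
    nlinarith
  have hW : ‖S ^ (1 / p - 1) • ((u + κ) ^ (p - 1) • a)‖ ^ p
      = ((u + κ) ^ p / S) ^ (p - 1) * ‖a‖ ^ p := by
    rw [norm_smul, norm_smul, Real.norm_of_nonneg (by positivity),
        Real.norm_of_nonneg (by positivity), ← mul_assoc, Real.mul_rpow (by positivity) (by positivity),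
        Real.mul_rpow (by positivity) (by positivity), ← Real.rpow_mul hS0.le, ← Real.rpow_mul hU.le,
        Real.div_rpow hUp.le hS0.le, ← Real.rpow_mul hU.le]
    have : (1 / p - 1) * p = -(p - 1) := by field_simp; ring
    rw [this, Real.rpow_neg hS0.le, mul_comm p (p - 1)]
    field_simp
  set x := δ ^ p * (1 + κ) ^ p / S with hx
  have hx0 : 0 ≤ x := by positivity
  have hx1 : x ≤ 1 := by rw [hx, div_le_one hS0]; linarith
  have hux : (u + κ) ^ p / S = 1 + -x := by
    rw [hx]; field_simp; rw [hS]; ring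
  have hB : ((u + κ) ^ p / S) ^ (p - 1) ≤ 1 - min 1 (p - 1) * x := by
    rw [hux]
    rcases le_total 1 (p - 1) with h | h
    · rw [min_eq_left h]
      have := Real.rpow_le_rpow_of_exponent_ge' (x := 1 + -x) (by linarith) (by linarith) zero_le_one h
      rw [Real.rpow_one] at this; linarith
    · rw [min_eq_right h]
      have := rpow_one_add_le_one_add_mul_self (s := -x) (by linarith) (p := p - 1) (by linarith) h
      linarith
  have hxge : δ ^ p / (u + 3 * δ) ^ p ≤ x := by
    rw [hx]
    gcongr
    nlinarith
  have hm : 0 < min 1 (p - 1) := lt_min one_pos (by linarith)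
  rw [hW, Real.div_rpow (norm_nonneg _) (by positivity)]
  have ha : 0 ≤ ‖a‖ ^ p := by positivity
  have h1 := mul_le_mul_of_nonneg_right hB ha
  have h2 := mul_le_mul_of_nonneg_right (mul_le_mul_of_nonneg_left hxge hm.le) ha
  have h3 : min 1 (p - 1) * δ ^ p * (‖a‖ ^ p / (u + 3 * δ) ^ p)
      = min 1 (p - 1) * (δ ^ p / (u + 3 * δ) ^ p) * ‖a‖ ^ p := by ring
  rw [h3]
  nlinarith

/-- logarithmic estimate for almost minimizers -/
lemma log_est {N : ℕ} {p : ℝ} (hp : 1 < p) {Ω K : Set (EN N)} {u η : EN N → ℝ}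
    (hu : ContDiff ℝ (⊤ : ℕ∞) u) (hc : HasCompactSupport u) (hs : tsupport u ⊆ Ω)
    (hu0 : ∀ x, 0 ≤ u x)
    (hη : ContDiff ℝ (⊤ : ℕ∞) η) (hηc : HasCompactSupport η) (hηs : tsupport η ⊆ Ω)
    (hη0 : ∀ x, 0 ≤ η x) (hK : IsOpen K) (hη1 : ∀ x ∈ K, η x = 1) {δ : ℝ} (hδ0 : 0 < δ)
    (hδ : δ ≤ 1) :
    min 1 (p - 1) * δ ^ p * ∫ x in K, (‖fderiv ℝ u x‖ / (u x + 3 * δ)) ^ p ≤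
      (∫ x, ‖fderiv ℝ u x‖ ^ p) - lam1 p Ω * (∫ x, |u x| ^ p) + δ ^ p * ∫ x, ‖fderiv ℝ η x‖ ^ p := by
  have hp0 : p ≠ 0 := by linarith
  have hδp : 0 < δ ^ p := Real.rpow_pos_of_pos hδ0 p
  have hδp1 : δ ^ p ≤ 1 := Real.rpow_le_one hδ0.le hδ (by linarith)
  set J := ∫ x in K, (‖fderiv ℝ u x‖ / (u x + 3 * δ)) ^ p with hJ
  have hg : Integrable (fun x => (‖fderiv ℝ u x‖ / (u x + 3 * δ)) ^ p) := by
    refine Continuous.integrable_of_hasCompactSupport ?_ ?_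
    · refine Continuous.rpow_const ?_ (fun _ => Or.inr (by linarith))
      refine ((hu.continuous_fderiv (by simp)).norm).div (hu.continuous.add continuous_const) ?_
      intro x; have := hu0 x; positivity
    · refine (hc.fderiv (𝕜 := ℝ)).mono' (fun x hx => subset_tsupport _ ?_)
      intro h
      apply hx
      simp [h, Real.zero_rpow hp0]
  have key : ∀ κ, 0 < κ → κ ≤ δ → lam1 p Ω * (∫ x, |max (u x - κ) 0| ^ p) + min 1 (p - 1) * δ ^ p * J ≤
      (∫ x, ‖fderiv ℝ u x‖ ^ p) + δ ^ p * ∫ x, ‖fderiv ℝ η x‖ ^ p := by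
    intro κ hκ hκδ
    have hU : ∀ x, 0 < u x + κ := fun x => by linarith [hu0 x]
    have hH : ∀ x, 0 < η x + κ := fun x => by linarith [hη0 x]
    have hS : ∀ x, 0 < (u x + κ) ^ p + δ ^ p * (η x + κ) ^ p := fun x => by
      have := Real.rpow_pos_of_pos (hU x) p
      have := Real.rpow_pos_of_pos (hH x) p
      positivity
    let W : EN N → ℝ := fun x => ((u x + κ) ^ p + δ ^ p * (η x + κ) ^ p) ^ (1 / p)
      - (κ ^ p + δ ^ p * κ ^ p) ^ (1 / p)
    have hWs : ContDiff ℝ (⊤ : ℕ∞) W := by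
      refine ContDiff.sub (ContDiff.rpow_const_of_ne ?_ (fun x => (hS x).ne')) contDiff_const
      refine ContDiff.add ?_ (contDiff_const.mul ?_)
      · exact ContDiff.rpow_const_of_ne (hu.add contDiff_const) (fun x => (hU x).ne')
      · exact ContDiff.rpow_const_of_ne (hη.add contDiff_const) (fun x => (hH x).ne')
    have hWsupp : tsupport W ⊆ tsupport u ∪ tsupport η := by
      refine closure_minimal ?_ ((isClosed_tsupport _).union (isClosed_tsupport _))
      intro x hx
      by_contra hcon
      rw [mem_union, not_or] at hcon
      apply hx
      simp [W, image_eq_zero_of_notMem_tsupport hcon.1, image_eq_zero_of_notMem_tsupport hcon.2]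
    have hWc : HasCompactSupport W :=
      (IsCompact.union hc hηc).of_isClosed_subset (isClosed_tsupport _) hWsupp
    have hW := rayleigh hp hWs hWc (hWsupp.trans (union_subset hs hηs))
    have hfd : ∀ x, fderiv ℝ W x = ((u x + κ) ^ p + δ ^ p * (η x + κ) ^ p) ^ (1 / p - 1) •
        ((u x + κ) ^ (p - 1) • fderiv ℝ u x + (δ ^ p * (η x + κ) ^ (p - 1)) • fderiv ℝ η x) := by
      intro x
      have h1 : HasFDerivAt u (fderiv ℝ u x) x := (hu.differentiable (by simp) x).hasFDerivAt
      have h2 : HasFDerivAt η (fderiv ℝ η x) x := (hη.differentiable (by simp) x).hasFDerivAt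
      have h3 := (((h1.add_const κ).rpow_const (p := p) (Or.inl (hU x).ne')).add
        (((h2.add_const κ).rpow_const (p := p) (Or.inl (hH x).ne')).const_mul (δ ^ p))).rpow_const
        (p := 1 / p) (Or.inl (hS x).ne') |>.sub_const ((κ ^ p + δ ^ p * κ ^ p) ^ (1 / p))
      have h4 : fderiv ℝ W x = _ := h3.fderiv
      rw [h4]
      ext y
      simp
      field_simp
    have hlow : ∫ x, |max (u x - κ) 0| ^ p ≤ ∫ x, |W x| ^ p := by
      refine integral_mono_of_nonneg (Eventually.of_forall fun x => by positivity)
        (int_fun hp hWs.continuous hWc) (Eventually.of_forall fun x => ?_)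
      refine Real.rpow_le_rpow (abs_nonneg _) ?_ (by linarith)
      have hW0 : 0 ≤ W x := by
        simp only [W]
        rw [sub_nonneg]
        have := hu0 x
        have := hη0 x
        gcongr <;> linarith
      have hWge : u x - κ ≤ W x := by
        have h1 : u x + κ ≤ ((u x + κ) ^ p + δ ^ p * (η x + κ) ^ p) ^ (1 / p) := by
          calc u x + κ = ((u x + κ) ^ p) ^ (1 / p) := by
                rw [← Real.rpow_mul (hU x).le, mul_one_div_cancel hp0, Real.rpow_one]
            _ ≤ _ := by
                refine Real.rpow_le_rpow (Real.rpow_nonneg (hU x).le _) ?_ (by positivity)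
                have := Real.rpow_pos_of_pos (hH x) p
                have : 0 < δ ^ p * (η x + κ) ^ p := by positivity
                linarith
        have h2 : (κ ^ p + δ ^ p * κ ^ p) ^ (1 / p) ≤ 2 * κ := by
          calc (κ ^ p + δ ^ p * κ ^ p) ^ (1 / p) ≤ ((2 * κ) ^ p) ^ (1 / p) := by
                refine Real.rpow_le_rpow (by positivity) ?_ (by positivity)
                have h5 := Real.add_rpow_le_rpow_add hκ.le hκ.le hp.le
                have : δ ^ p * κ ^ p ≤ κ ^ p := mul_le_of_le_one_left (by positivity) hδp1
                rw [two_mul]; linarith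
            _ = _ := by
                rw [← Real.rpow_mul (by positivity), mul_one_div_cancel hp0, Real.rpow_one]
        simp only [W]; linarith
      rw [abs_of_nonneg hW0, abs_of_nonneg (le_max_right _ _)]
      exact max_le hWge hW0
    have hup : (∫ x, ‖fderiv ℝ W x‖ ^ p) + min 1 (p - 1) * δ ^ p * J ≤
        (∫ x, ‖fderiv ℝ u x‖ ^ p) + δ ^ p * ∫ x, ‖fderiv ℝ η x‖ ^ p := by
      rw [hJ, ← integral_indicator hK.measurableSet, ← integral_const_mul, ← integral_const_mul,
        ← integral_add (int_grad hp hWs hWc) ((hg.indicator hK.measurableSet).const_mul _),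
        ← integral_add (int_grad hp hu hc) ((int_grad hp hη hηc).const_mul _)]
      refine integral_mono ((int_grad hp hWs hWc).add ((hg.indicator hK.measurableSet).const_mul _))
        ((int_grad hp hu hc).add ((int_grad hp hη hηc).const_mul _)) (fun x => ?_)
      simp only
      rw [hfd]
      by_cases hx : x ∈ K
      · have hη' : fderiv ℝ η x = 0 := by
          have : η =ᶠ[𝓝 x] fun _ => (1 : ℝ) := by
            filter_upwards [hK.mem_nhds hx] with y hy using hη1 y hy
          rw [this.fderiv_eq]; simp
        rw [indicator_of_mem hx, hη1 x hx, hη']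
        have := hidden_deficit hp (hu0 x) hκ hκδ hδ (fderiv ℝ u x)
        simpa [Real.zero_rpow hp0] using this
      · rw [indicator_of_notMem hx]
        have := hidden_convex hp (hU x) (hH x) hδp (fderiv ℝ u x) (fderiv ℝ η x)
        simpa using this
    have := mul_le_mul_of_nonneg_left hlow (lam1_nonneg p Ω)
    linarith
  have hlim : Tendsto (fun κ => ∫ x, |max (u x - κ) 0| ^ p) (𝓝[>] 0) (𝓝 (∫ x, |u x| ^ p)) := by
    refine tendsto_integral_filter_of_dominated_convergence (fun x => |u x| ^ p) ?_ ?_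
      (int_fun hp hu.continuous hc) ?_
    · refine Eventually.of_forall (fun κ => ?_)
      have : Continuous (fun x => |max (u x - κ) 0| ^ p) := by
        have := hu.continuous
        refine Continuous.rpow_const ?_ (fun _ => Or.inr (by linarith))
        fun_prop
      exact this.aestronglyMeasurable
    · filter_upwards [self_mem_nhdsWithin] with κ hκ
      refine Eventually.of_forall (fun x => ?_)
      have hκ : 0 < κ := hκ
      rw [Real.norm_of_nonneg (by positivity)]
      refine Real.rpow_le_rpow (abs_nonneg _) ?_ (by linarith)
      rw [abs_of_nonneg (le_max_right _ _), abs_of_nonneg (hu0 x)]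
      exact max_le (by linarith) (hu0 x)
    · refine Eventually.of_forall (fun x => ?_)
      refine Tendsto.mono_left ?_ nhdsWithin_le_nhds
      have : Continuous (fun κ => |max (u x - κ) 0| ^ p) := by
        refine Continuous.rpow_const ?_ (fun _ => Or.inr (by linarith))
        fun_prop
      have h := this.tendsto 0
      simpa [hu0 x] using h
  have hfin : lam1 p Ω * (∫ x, |u x| ^ p) + min 1 (p - 1) * δ ^ p * J ≤
      (∫ x, ‖fderiv ℝ u x‖ ^ p) + δ ^ p * ∫ x, ‖fderiv ℝ η x‖ ^ p := by
    refine le_of_tendsto ((hlim.const_mul (lam1 p Ω)).add_const (min 1 (p - 1) * δ ^ p * J)) ?_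
    filter_upwards [Ioc_mem_nhdsGT hδ0] with κ hκ using key κ hκ.1 hκ.2
  linarith

lemma trans_est {N : ℕ} {g : EN N → ℝ} (hg : ContDiff ℝ 1 g) (v : EN N) {S K : Set (EN N)}
    (hS : MeasurableSet S) (hK : MeasurableSet K)
    (hSK : ∀ y ∈ S, ∀ t ∈ Icc (0 : ℝ) 1, y + t • v ∈ K) :
    ∫⁻ y in S, ‖g (y + v) - g y‖ₑ ≤ ‖v‖ₑ * ∫⁻ y in K, ‖fderiv ℝ g y‖ₑ := by
  have hcf : Continuous (fderiv ℝ g) := hg.continuous_fderiv (by simp)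
  have hpt : ∀ y, ‖g (y + v) - g y‖ₑ ≤
      ∫⁻ t in Ioc (0 : ℝ) 1, ‖fderiv ℝ g (y + t • v)‖ₑ * ‖v‖ₑ := by
    intro y
    have hd : ∀ t ∈ uIcc (0 : ℝ) 1,
        HasDerivAt (fun t : ℝ => g (y + t • v)) (fderiv ℝ g (y + t • v) v) t := by
      intro t _
      have h1 : HasFDerivAt g (fderiv ℝ g (y + t • v)) (y + t • v) :=
        (hg.differentiable (by simp) _).hasFDerivAt
      have h2 : HasDerivAt (fun t : ℝ => y + t • v) v t := by
        simpa using ((hasDerivAt_id t).smul_const v).const_add y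
      exact h1.comp_hasDerivAt t h2
    have hcont : Continuous (fun t : ℝ => fderiv ℝ g (y + t • v) v) := by fun_prop
    have h := intervalIntegral.integral_eq_sub_of_hasDerivAt hd (hcont.intervalIntegrable 0 1)
    simp only [one_smul, zero_smul, add_zero] at h
    rw [← h, intervalIntegral.integral_of_le zero_le_one]
    refine (enorm_integral_le_lintegral_enorm _).trans (lintegral_mono fun t => ?_)
    exact ContinuousLinearMap.le_opENorm _ _
  calc ∫⁻ y in S, ‖g (y + v) - g y‖ₑ
      ≤ ∫⁻ y in S, ∫⁻ t in Ioc (0 : ℝ) 1, ‖fderiv ℝ g (y + t • v)‖ₑ * ‖v‖ₑ :=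
        lintegral_mono hpt
    _ = ∫⁻ t in Ioc (0 : ℝ) 1, ∫⁻ y in S, ‖fderiv ℝ g (y + t • v)‖ₑ * ‖v‖ₑ := by
        refine lintegral_lintegral_swap ?_
        refine Continuous.aemeasurable ?_
        have : Continuous (fun z : EN N × ℝ => ‖fderiv ℝ g (z.1 + z.2 • v)‖ₑ) := by fun_prop
        exact ENNReal.continuous_mul_const (by simp) |>.comp this
    _ ≤ ∫⁻ t in Ioc (0 : ℝ) 1, ‖v‖ₑ * ∫⁻ y in K, ‖fderiv ℝ g y‖ₑ := by
        refine setLIntegral_mono measurable_const (fun t ht => ?_)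
        rw [lintegral_mul_const' _ _ (by simp), mul_comm]
        refine mul_le_mul_right ?_ _
        rw [← lintegral_indicator hS, ← lintegral_indicator hK,
          ← lintegral_add_right_eq_self (K.indicator fun y => ‖fderiv ℝ g y‖ₑ) (t • v)]
        refine lintegral_mono (fun y => ?_)
        by_cases hy : y ∈ S
        · rw [indicator_of_mem hy, indicator_of_mem (hSK y hy t ⟨ht.1.le, ht.2⟩)]
        · rw [indicator_of_notMem hy]; exact zero_le
    _ = _ := by simp

lemma step_est {N : ℕ} {p : ℝ} (hp : 1 < p) {Ω : Set (EN N)} {u η : EN N → ℝ} {x v : EN N} {ρ r : ℝ}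
    (hu : ContDiff ℝ (⊤ : ℕ∞) u) (hc : HasCompactSupport u) (hs : tsupport u ⊆ Ω)
    (hu0 : ∀ x, 0 ≤ u x)
    (hη : ContDiff ℝ (⊤ : ℕ∞) η) (hηc : HasCompactSupport η) (hηs : tsupport η ⊆ Ω)
    (hη0 : ∀ x, 0 ≤ η x) (hη1 : ∀ y ∈ ball x (2 * r), η y = 1) {δ c ε : ℝ} (hδ0 : 0 < δ)
    (hδ : δ ≤ 1) (hρ : ρ ≤ r) (hv : ‖v‖ < r) (hcδ : 4 * δ < c)
    (hε : (∫ x, ‖fderiv ℝ u x‖ ^ p) - lam1 p Ω * (∫ x, |u x| ^ p) ≤ ε) :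
    ENNReal.ofReal (Real.log (c / (4 * δ))) * volume {y ∈ ball x ρ | c < u y ∧ u (y + v) ≤ δ} ≤
      ENNReal.ofReal (‖v‖ * (volume.real (ball x (2 * r)) +
        (ε / δ ^ p + ∫ x, ‖fderiv ℝ η x‖ ^ p) / min 1 (p - 1))) := by
  have hlog := log_est (K := ball x (2 * r)) hp hu hc hs hu0 hη hηc hηs hη0 isOpen_ball hη1 hδ0 hδ
  have hδp : 0 < δ ^ p := Real.rpow_pos_of_pos hδ0 p
  have hm : 0 < min 1 (p - 1) := lt_min one_pos (by linarith)
  have hpos : ∀ y, 0 < u y + 3 * δ := fun y => by linarith [hu0 y]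
  set K := ball x (2 * r) with hKdef
  set D := ∫ x, ‖fderiv ℝ η x‖ ^ p with hD
  set J := ∫ x in K, (‖fderiv ℝ u x‖ / (u x + 3 * δ)) ^ p with hJ
  have hJle : J ≤ (ε / δ ^ p + D) / min 1 (p - 1) := by
    rw [le_div_iff₀ hm]
    have : min 1 (p - 1) * δ ^ p * J ≤ ε + δ ^ p * D := by linarith
    have h2 : J * min 1 (p - 1) * δ ^ p ≤ (ε / δ ^ p + D) * δ ^ p := by
      have : (ε / δ ^ p + D) * δ ^ p = ε + δ ^ p * D := by field_simp
      rw [this]; linarith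
    exact le_of_mul_le_mul_right h2 hδp
  let g : EN N → ℝ := fun y => Real.log (u y + 3 * δ)
  have hg : ContDiff ℝ 1 g := by
    refine ContDiff.log ?_ (fun y => (hpos y).ne')
    exact (hu.of_le (by exact_mod_cast le_top)).add contDiff_const
  have hfg : ∀ y, ‖fderiv ℝ g y‖ = ‖fderiv ℝ u y‖ / (u y + 3 * δ) := by
    intro y
    have h1 : HasFDerivAt u (fderiv ℝ u y) y := (hu.differentiable (by simp) y).hasFDerivAt
    have h2 : fderiv ℝ g y = _ := ((h1.add_const (3 * δ)).log (hpos y).ne').fderiv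
    rw [h2, norm_smul, norm_inv, Real.norm_of_nonneg (hpos y).le]; field_simp
  have hcg : Continuous (fun y => ‖fderiv ℝ u y‖ / (u y + 3 * δ)) :=
    ((hu.continuous_fderiv (by simp)).norm).div (hu.continuous.add continuous_const)
      (fun y => (hpos y).ne')
  have hgi : IntegrableOn (fun y => 1 + (‖fderiv ℝ u y‖ / (u y + 3 * δ)) ^ p) K := by
    have : Continuous (fun y => 1 + (‖fderiv ℝ u y‖ / (u y + 3 * δ)) ^ p) :=
      continuous_const.add (hcg.rpow_const (fun _ => Or.inr (by linarith)))
    exact (this.continuousOn.integrableOn_compact (isCompact_closedBall x (2 * r))).mono_set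
      ball_subset_closedBall
  have hgi2 : IntegrableOn (fun y => (‖fderiv ℝ u y‖ / (u y + 3 * δ)) ^ p) K := by
    have : Continuous (fun y => (‖fderiv ℝ u y‖ / (u y + 3 * δ)) ^ p) :=
      (hcg.rpow_const (fun _ => Or.inr (by linarith)))
    exact (this.continuousOn.integrableOn_compact (isCompact_closedBall x (2 * r))).mono_set
      ball_subset_closedBall
  have hKint : ∫⁻ y in K, ‖fderiv ℝ g y‖ₑ ≤ ENNReal.ofReal (volume.real K + J) := by
    have h1 : ∫ y in K, (1 + (‖fderiv ℝ u y‖ / (u y + 3 * δ)) ^ p) = volume.real K + J := by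
      rw [integral_add _ hgi2]
      · simp [hJ]
      · exact integrableOn_const (measure_ball_lt_top.ne)
    rw [← h1, ofReal_integral_eq_lintegral_ofReal hgi]
    · refine lintegral_mono (fun y => ?_)
      rw [← ofReal_norm, hfg]
      refine ENNReal.ofReal_le_ofReal ?_
      have h0 : 0 ≤ ‖fderiv ℝ u y‖ / (u y + 3 * δ) := div_nonneg (norm_nonneg _) (hpos y).le
      rcases le_total (‖fderiv ℝ u y‖ / (u y + 3 * δ)) 1 with h | h
      · have : 0 ≤ (‖fderiv ℝ u y‖ / (u y + 3 * δ)) ^ p := by positivity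
        linarith
      · have := Real.rpow_le_rpow_of_exponent_le h hp.le
        rw [Real.rpow_one] at this; linarith
    · refine Eventually.of_forall (fun y => ?_)
      have h0 : 0 ≤ ‖fderiv ℝ u y‖ / (u y + 3 * δ) := div_nonneg (norm_nonneg _) (hpos y).le
      simp only [Pi.zero_apply]
      positivity
  have hseg : ∀ y ∈ ball x ρ, ∀ t ∈ Icc (0 : ℝ) 1, y + t • v ∈ K := by
    intro y hy t ht
    rw [mem_ball, dist_eq_norm] at *
    calc ‖y + t • v - x‖ = ‖(y - x) + t • v‖ := by congr 1; abel
      _ ≤ ‖y - x‖ + ‖t • v‖ := norm_add_le _ _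
      _ ≤ ‖y - x‖ + ‖v‖ := by
          rw [norm_smul, Real.norm_of_nonneg ht.1]
          have := mul_le_of_le_one_left (norm_nonneg v) ht.2
          linarith
      _ < 2 * r := by linarith
  have htr := trans_est hg v (S := ball x ρ) (K := K) measurableSet_ball measurableSet_ball hseg
  have hmeas : MeasurableSet {y ∈ ball x ρ | c < u y ∧ u (y + v) ≤ δ} := by
    have := hu.continuous
    refine measurableSet_ball.inter (MeasurableSet.inter ?_ ?_)
    · exact (isOpen_lt continuous_const this).measurableSet
    · exact (isClosed_le (this.comp (continuous_id.add continuous_const)) continuous_const).measurableSet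
  calc ENNReal.ofReal (Real.log (c / (4 * δ))) * volume {y ∈ ball x ρ | c < u y ∧ u (y + v) ≤ δ}
      = ∫⁻ y in {y ∈ ball x ρ | c < u y ∧ u (y + v) ≤ δ}, ENNReal.ofReal (Real.log (c / (4 * δ))) := by
        rw [setLIntegral_const]
    _ ≤ ∫⁻ y in {y ∈ ball x ρ | c < u y ∧ u (y + v) ≤ δ}, ‖g (y + v) - g y‖ₑ := by
        refine setLIntegral_mono' hmeas (fun y hy => ?_)
        rw [← ofReal_norm, norm_sub_rev]
        refine ENNReal.ofReal_le_ofReal (le_trans ?_ (Real.le_norm_self _))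
        simp only [g]
        rw [Real.log_div (by linarith) (by positivity)]
        have h1 : Real.log c ≤ Real.log (u y + 3 * δ) :=
          Real.log_le_log (by linarith) (by linarith [hy.2.1])
        have h2 : Real.log (u (y + v) + 3 * δ) ≤ Real.log (4 * δ) :=
          Real.log_le_log (hpos _) (by linarith [hy.2.2])
        linarith
    _ ≤ ∫⁻ y in ball x ρ, ‖g (y + v) - g y‖ₑ := lintegral_mono_set (fun y hy => hy.1)
    _ ≤ ‖v‖ₑ * ∫⁻ y in K, ‖fderiv ℝ g y‖ₑ := htr
    _ ≤ ENNReal.ofReal ‖v‖ * ENNReal.ofReal (volume.real K + J) := by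
        rw [ofReal_norm]; gcongr
    _ = ENNReal.ofReal (‖v‖ * (volume.real K + J)) := by
        rw [ENNReal.ofReal_mul (norm_nonneg _)]
    _ ≤ _ := by
        refine ENNReal.ofReal_le_ofReal ?_
        gcongr

def Good {N : ℕ} (u : ℕ → EN N → ℝ) (x : EN N) (ρ : ℝ) : Prop :=
  ∀ c > 0, Tendsto (fun n => volume (ball x ρ ∩ {y | c < u n y})) atTop (𝓝 0)

lemma Good.mono {N : ℕ} {u : ℕ → EN N → ℝ} {x y : EN N} {ρ ρ' : ℝ} (h : Good u x ρ)
    (hs : ball y ρ' ⊆ ball x ρ) : Good u y ρ' := fun c hc =>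
  tendsto_of_tendsto_of_tendsto_of_le_of_le tendsto_const_nhds (h c hc) (fun _ => zero_le)
    (fun _ => measure_mono (inter_subset_inter_left _ hs))

lemma good_step {N : ℕ} {p : ℝ} (hp : 1 < p) {Ω : Set (EN N)} {u : ℕ → EN N → ℝ}
    (hu : ∀ n, ContDiff ℝ (⊤ : ℕ∞) (u n)) (hc : ∀ n, HasCompactSupport (u n))
    (hs : ∀ n, tsupport (u n) ⊆ Ω) (hu0 : ∀ n x, 0 ≤ u n x) {ε : ℕ → ℝ}
    (hε : Tendsto ε atTop (𝓝 0))
    (hQ : ∀ n, (∫ x, ‖fderiv ℝ (u n) x‖ ^ p) - lam1 p Ω * (∫ x, |u n x| ^ p) ≤ ε n)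
    {x a : EN N} {r ρ : ℝ} (hr : 0 < r) (hx : closedBall x (3 * r) ⊆ Ω) (ha : dist a x < r)
    (hρ : ρ ≤ r) (hg : Good u a ρ) : Good u x ρ := by
  intro c hc0
  let b : ContDiffBump x := ⟨2 * r, 3 * r, by positivity, by linarith⟩
  have hb1 : ∀ y ∈ ball x (2 * r), b y = 1 := fun y hy =>
    b.one_of_mem_closedBall (ball_subset_closedBall hy)
  have hbs : tsupport b ⊆ Ω := by rw [b.tsupport_eq]; exact hx
  set v := a - x with hv
  have hvn : ‖v‖ < r := by rw [hv, ← dist_eq_norm]; exact ha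
  set M := ‖v‖ * (volume.real (ball x (2 * r)) +
        (1 + ∫ x, ‖fderiv ℝ b x‖ ^ p) / min 1 (p - 1)) with hM
  have hm : 0 < min 1 (p - 1) := lt_min one_pos (by linarith)
  rw [ENNReal.tendsto_nhds_zero]
  intro e he
  obtain ⟨e', he'0, he'⟩ := ENNReal.lt_iff_exists_real_btwn.mp he
  have he'1 : 0 < e' := by simpa using he'.1
  -- choose δ
  have hδex : ∃ δ : ℝ, 0 < δ ∧ δ ≤ 1 ∧ 4 * δ < c ∧ 2 * M / e' ≤ Real.log (c / (4 * δ)) ∧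
      0 < Real.log (c / (4 * δ)) := by
    set L := max (2 * M / e') 1 with hL
    have hexp : 0 < Real.exp (-L) := Real.exp_pos _
    refine ⟨min 1 (c / 4 * Real.exp (-L)), by positivity, min_le_left _ _, ?_, ?_⟩
    · have h1 : Real.exp (-L) < 1 := by
        rw [Real.exp_lt_one_iff]
        have : 1 ≤ L := le_max_right _ _
        linarith
      have h2 := min_le_right 1 (c / 4 * Real.exp (-L))
      nlinarith
    · have : L ≤ Real.log (c / (4 * min 1 (c / 4 * Real.exp (-L)))) := by
        rw [Real.le_log_iff_exp_le (by positivity), le_div_iff₀ (by positivity)]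
        have h2 := min_le_right 1 (c / 4 * Real.exp (-L))
        calc Real.exp L * (4 * min 1 (c / 4 * Real.exp (-L)))
            ≤ Real.exp L * (4 * (c / 4 * Real.exp (-L))) := by gcongr
          _ = c * (Real.exp L * Real.exp (-L)) := by ring
          _ = c := by rw [← Real.exp_add]; simp
      exact ⟨(le_max_left _ _).trans this, lt_of_lt_of_le one_pos ((le_max_right _ _).trans this)⟩
  obtain ⟨δ, hδ0, hδ1, hδc, hδM, hδL⟩ := hδex
  have hδp : 0 < δ ^ p := Real.rpow_pos_of_pos hδ0 p
  have hev1 : ∀ᶠ n in atTop, ε n ≤ δ ^ p := (hε.eventually (gt_mem_nhds hδp)).mono fun n h => h.le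
  have hev2 := (ENNReal.tendsto_nhds_zero.mp (hg δ hδ0)) (ENNReal.ofReal (e' / 2)) (by simpa using he'1)
  filter_upwards [hev1, hev2] with n hn1 hn2
  have hst := step_est (x := x) (v := v) (ρ := ρ) (r := r) (c := c) hp (hu n) (hc n) (hs n) (hu0 n)
    b.contDiff b.hasCompactSupport hbs (fun y => b.nonneg) hb1 hδ0 hδ1 hρ hvn hδc
    ((hQ n).trans hn1)
  rw [div_self hδp.ne', ← hM] at hst
  have hE : volume {y ∈ ball x ρ | c < u n y ∧ u n (y + v) ≤ δ} ≤ ENNReal.ofReal (e' / 2) := by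
    have hL0 : ENNReal.ofReal (Real.log (c / (4 * δ))) ≠ 0 := by simpa using hδL
    rw [← ENNReal.mul_le_mul_iff_right hL0 ENNReal.ofReal_ne_top]
    refine hst.trans ?_
    rw [← ENNReal.ofReal_mul hδL.le]
    refine ENNReal.ofReal_le_ofReal ?_
    rw [div_le_iff₀ he'1] at hδM
    linarith
  have hsub : ball x ρ ∩ {y | c < u n y} ⊆ {y ∈ ball x ρ | c < u n y ∧ u n (y + v) ≤ δ} ∪
      (fun y => y + v) ⁻¹' (ball a ρ ∩ {y | δ < u n y}) := by
    rintro y ⟨hy1, hy2⟩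
    by_cases h : u n (y + v) ≤ δ
    · exact Or.inl ⟨hy1, hy2, h⟩
    · refine Or.inr ⟨?_, not_le.mp h⟩
      rw [mem_ball, dist_eq_norm] at *
      have hya : y + v - a = y - x := by
        rw [hv, add_sub_assoc, sub_sub_cancel_left, sub_eq_add_neg]
      rw [hya]
      exact hy1
  calc volume (ball x ρ ∩ {y | c < u n y}) ≤ _ := measure_mono hsub
    _ ≤ _ := measure_union_le _ _
    _ ≤ ENNReal.ofReal (e' / 2) + ENNReal.ofReal (e' / 2) := by
        rw [measure_preimage_add_right]
        exact add_le_add hE hn2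
    _ = ENNReal.ofReal e' := by
        rw [← ENNReal.ofReal_add (by positivity) (by positivity)]; congr 1; ring
    _ ≤ e := he'.2.le

lemma good_all {N : ℕ} {p : ℝ} (hp : 1 < p) {Ω : Set (EN N)} (ho : IsOpen Ω)
    (hconn : IsPreconnected Ω) {u : ℕ → EN N → ℝ}
    (hu : ∀ n, ContDiff ℝ (⊤ : ℕ∞) (u n)) (hc : ∀ n, HasCompactSupport (u n))
    (hs : ∀ n, tsupport (u n) ⊆ Ω) (hu0 : ∀ n x, 0 ≤ u n x) {ε : ℕ → ℝ}
    (hε : Tendsto ε atTop (𝓝 0))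
    (hQ : ∀ n, (∫ x, ‖fderiv ℝ (u n) x‖ ^ p) - lam1 p Ω * (∫ x, |u n x| ^ p) ≤ ε n)
    {x₀ : EN N} {r₀ : ℝ} (hx₀ : x₀ ∈ Ω) (hr₀ : 0 < r₀) (h0 : Good u x₀ r₀) :
    ∀ x ∈ Ω, ∃ ρ > 0, Good u x ρ := by
  let A : Set (EN N) := {x | ∃ ρ > 0, Good u x ρ}
  have hAo : IsOpen A := by
    rw [Metric.isOpen_iff]
    rintro x ⟨ρ, hρ, hg⟩
    refine ⟨ρ / 2, by positivity, fun y hy => ⟨ρ / 2, by positivity, hg.mono ?_⟩⟩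
    refine ball_subset_ball' ?_
    rw [mem_ball] at hy; linarith
  have : Ω ⊆ A := by
    refine hconn.subset_of_closure_inter_subset hAo ⟨x₀, hx₀, r₀, hr₀, h0⟩ ?_
    rintro x ⟨hx1, hx2⟩
    obtain ⟨R, hR, hRs⟩ := Metric.nhds_basis_closedBall.mem_iff.mp (ho.mem_nhds hx2)
    obtain ⟨a, ⟨ρ, hρ, hg⟩, ha⟩ := Metric.mem_closure_iff.mp hx1 (R / 3) (by positivity)
    refine ⟨min ρ (R / 3), by positivity, ?_⟩
    refine good_step hp hu hc hs hu0 hε hQ (r := R / 3) (a := a) (by positivity) ?_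
      (by rwa [dist_comm]) (min_le_right _ _) (hg.mono (ball_subset_ball (min_le_left _ _)))
    rw [show 3 * (R / 3) = R by ring]; exact hRs
  exact this

lemma tendsto_meas {N : ℕ} {Ω : Set (EN N)} (ho : IsOpen Ω) (hfin : volume Ω ≠ ⊤)
    {u : ℕ → EN N → ℝ} (hs : ∀ n, tsupport (u n) ⊆ Ω)
    (hg : ∀ x ∈ Ω, ∃ ρ > 0, Good u x ρ) {c : ℝ} (hc : 0 < c) :
    Tendsto (fun n => volume {y | c < u n y}) atTop (𝓝 0) := by
  rw [ENNReal.tendsto_nhds_zero]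
  intro e he
  obtain ⟨K, hKs, hK, hKm⟩ := ho.measurableSet.exists_isCompact_sdiff_lt hfin
    (ENNReal.half_pos he.ne').ne'
  choose! ρ hρ hgood using hg
  obtain ⟨t, htK, hcov⟩ := hK.elim_nhds_subcover (fun x => ball x (ρ x))
    (fun x hx => ball_mem_nhds x (hρ x (hKs hx)))
  have hsum : Tendsto (fun n => ∑ x ∈ t, volume (ball x (ρ x) ∩ {y | c < u n y})) atTop (𝓝 0) := by
    have := tendsto_finsetSum t (fun x hx => hgood x (hKs (htK x hx)) c hc)
    simpa using this
  filter_upwards [(ENNReal.tendsto_nhds_zero.mp hsum) (e / 2) (ENNReal.half_pos he.ne')] with n hn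
  have hsub : {y | c < u n y} ⊆ (⋃ x ∈ t, ball x (ρ x) ∩ {y | c < u n y}) ∪ (Ω \ K) := by
    intro y hy
    have hyΩ : y ∈ Ω := hs n (subset_tsupport _ (by
      intro h; change c < u n y at hy; rw [h] at hy; linarith))
    by_cases hyK : y ∈ K
    · left
      have := hcov hyK
      simp only [mem_iUnion] at this ⊢
      obtain ⟨x, hx, hxy⟩ := this
      exact ⟨x, hx, hxy, hy⟩
    · exact Or.inr ⟨hyΩ, hyK⟩
  calc volume {y | c < u n y} ≤ _ := measure_mono hsub
    _ ≤ _ := measure_union_le _ _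
    _ ≤ e / 2 + e / 2 := add_le_add ((measure_biUnion_finset_le _ _).trans hn) hKm.le
    _ = e := ENNReal.add_halves e

open scoped NNReal in
lemma sob {N : ℕ} (hN : 2 ≤ N) {p : ℝ} (hp : 1 < p) {Ω : Set (EN N)}
    (hb : Bornology.IsBounded Ω) : ∃ q : ℝ≥0, p < q ∧ ∃ C : ℝ≥0∞, C ≠ ⊤ ∧
    ∀ u : EN N → ℝ, ContDiff ℝ (⊤ : ℕ∞) u → tsupport u ⊆ Ω →
      eLpNorm u q volume ≤ C * eLpNorm (fderiv ℝ u) (ENNReal.ofReal p) volume := by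
  have hp0 : 0 < p := by linarith
  have hN' : (2 : ℝ) ≤ N := by exact_mod_cast hN
  have hNi : (N : ℝ)⁻¹ ≤ 2⁻¹ := inv_anti₀ (by norm_num) hN'
  have hNi0 : 0 < (N : ℝ)⁻¹ := by positivity
  have hpi : p⁻¹ < 1 := inv_lt_one_of_one_lt₀ hp
  have hpi0 : 0 < p⁻¹ := by positivity
  set m : ℝ := max p⁻¹ ((N : ℝ)⁻¹ + p⁻¹ / 2) with hm
  have hm1 : m ≤ 1 := max_le hpi.le (by linarith)
  have hmN : (N : ℝ)⁻¹ < m := lt_of_lt_of_le (by linarith) (le_max_right _ _)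
  have hmp : p⁻¹ ≤ m := le_max_left _ _
  have hmq : m - (N : ℝ)⁻¹ < p⁻¹ := by
    rw [hm, sub_lt_iff_lt_add]; exact max_lt (by linarith) (by linarith)
  have hm0 : 0 < m := by linarith
  have hq0 : 0 < m - (N : ℝ)⁻¹ := by linarith
  let p' : ℝ≥0 := ⟨m⁻¹, by positivity⟩
  let q : ℝ≥0 := ⟨(m - (N : ℝ)⁻¹)⁻¹, by positivity⟩
  have hp'p : (p' : ℝ) ≤ p := by
    change m⁻¹ ≤ p
    rw [inv_le_comm₀ hm0 hp0]; exact hmp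
  refine ⟨q, ?_, ?_⟩
  · change p < (m - (N : ℝ)⁻¹)⁻¹
    rw [lt_inv_comm₀ hp0 hq0]; exact hmq
  refine ⟨eLpNormLESNormFDerivOfLeConst ℝ (volume : Measure (EN N)) Ω p' q *
    volume Ω ^ (1 / (p' : ℝ≥0∞).toReal - 1 / (ENNReal.ofReal p).toReal), ?_, ?_⟩
  · refine ENNReal.mul_ne_top (by simp) (ENNReal.rpow_ne_top_of_nonneg ?_ hb.measure_lt_top.ne)
    rw [ENNReal.toReal_ofReal hp0.le, ENNReal.coe_toReal, sub_nonneg]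
    exact one_div_le_one_div_of_le (inv_pos.mpr hm0) hp'p
  · intro u hu hs
    have h1 : eLpNorm u q volume ≤ eLpNormLESNormFDerivOfLeConst ℝ (volume : Measure (EN N)) Ω p' q *
        eLpNorm (fderiv ℝ u) p' volume := by
      refine eLpNorm_le_eLpNorm_fderiv_of_le volume (hu.of_le (by exact_mod_cast le_top))
        ((subset_tsupport u).trans hs) ?_ ?_ ?_ hb
      · rw [← NNReal.coe_le_coe]
        change (1 : ℝ) ≤ m⁻¹
        exact (one_le_inv₀ hm0).mpr hm1
      · rw [finrank_euclideanSpace_fin, ← NNReal.coe_lt_coe]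
        change m⁻¹ < ((N : ℝ≥0) : ℝ)
        rw [NNReal.coe_natCast]
        exact (inv_lt_comm₀ (by positivity) hm0).mp hmN
      · rw [finrank_euclideanSpace_fin]
        change (m⁻¹)⁻¹ - (N : ℝ)⁻¹ ≤ ((m - (N : ℝ)⁻¹)⁻¹)⁻¹
        rw [inv_inv, inv_inv]
    have hsf : Function.support (fderiv ℝ u) ⊆ Ω := (support_fderiv_subset ℝ).trans hs
    have h2 : eLpNorm (fderiv ℝ u) p' volume ≤ eLpNorm (fderiv ℝ u) (ENNReal.ofReal p) volume *
        volume Ω ^ (1 / (p' : ℝ≥0∞).toReal - 1 / (ENNReal.ofReal p).toReal) := by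
      have hr := eLpNorm_restrict_eq_of_support_subset (f := fderiv ℝ u) (p := (p' : ℝ≥0∞))
        (μ := volume) (s := Ω) hsf
      rw [← hr]
      have := eLpNorm_le_eLpNorm_mul_rpow_measure_univ (μ := volume.restrict Ω) (f := fderiv ℝ u)
        (p := p') (q := ENNReal.ofReal p) ?_ (hu.continuous_fderiv (by simp)).aestronglyMeasurable
      · rw [Measure.restrict_apply_univ] at this
        refine this.trans ?_
        gcongr
        exact Measure.restrict_le_self
      · rw [ENNReal.le_ofReal_iff_toReal_le (by simp) hp0.le]; exact hp'p
    calc eLpNorm u q volume ≤ _ := h1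
      _ ≤ _ := mul_le_mul_right h2 _
      _ = _ := by ring

lemma eLp_fun {N : ℕ} {p : ℝ} (hp : 1 < p) {F : Type*} [NormedAddCommGroup F] {u : EN N → F}
    (hu : Continuous u) (hc : HasCompactSupport u) :
    eLpNorm u (ENNReal.ofReal p) volume = ENNReal.ofReal ((∫ x, ‖u x‖ ^ p) ^ p⁻¹) := by
  have := MemLp.eLpNorm_eq_integral_rpow_norm (f := u) (p := ENNReal.ofReal p) (μ := volume)
    (by simp; linarith) (by simp) (hu.memLp_of_hasCompactSupport hc)
  rw [this, ENNReal.toReal_ofReal (by linarith)]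

lemma no_vanish {N : ℕ} (hN : 2 ≤ N) {p : ℝ} (hp : 1 < p) {Ω : Set (EN N)} (ho : IsOpen Ω)
    (hb : Bornology.IsBounded Ω) {u : ℕ → EN N → ℝ}
    (hu : ∀ n, ContDiff ℝ (⊤ : ℕ∞) (u n)) (hc : ∀ n, HasCompactSupport (u n))
    (hs : ∀ n, tsupport (u n) ⊆ Ω) (hu0 : ∀ n x, 0 ≤ u n x)
    (h1 : ∀ n, ∫ x, |u n x| ^ p = 1) {B : ℝ} (hB : ∀ n, ∫ x, ‖fderiv ℝ (u n) x‖ ^ p ≤ B)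
    (hmeas : ∀ c > 0, Tendsto (fun n => volume {y | c < u n y}) atTop (𝓝 0)) : False := by
  have hp0 : 0 < p := by linarith
  obtain ⟨q, hpq, C, hC, hsob⟩ := sob hN hp hb
  have hΩ : volume Ω ≠ ⊤ := hb.measure_lt_top.ne
  have hV : volume Ω ^ (1 / (ENNReal.ofReal p).toReal) ≠ ⊤ :=
    ENNReal.rpow_ne_top_of_nonneg (by positivity) hΩ
  set V := (volume Ω ^ (1 / (ENNReal.ofReal p).toReal)).toReal with hVdef
  have hV0 : 0 ≤ V := ENNReal.toReal_nonneg
  set c : ℝ := 4⁻¹ / (V + 1) with hcdef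
  have hc0 : 0 < c := by positivity
  have hcV : c * V ≤ 4⁻¹ := by
    rw [hcdef, div_mul_eq_mul_div, div_le_iff₀ (by positivity)]; nlinarith
  set θ : ℝ := 1 / (ENNReal.ofReal p).toReal - 1 / (q : ℝ≥0∞).toReal with hθ
  have hθ0 : 0 < θ := by
    rw [hθ, ENNReal.toReal_ofReal hp0.le, ENNReal.coe_toReal, sub_pos]
    exact one_div_lt_one_div_of_lt hp0 hpq
  set B' : ℝ≥0∞ := ENNReal.ofReal (B ^ p⁻¹) with hB'
  have hlim : Tendsto (fun n => C * B' * volume {y | c < u n y} ^ θ) atTop (𝓝 0) := by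
    have h := (ENNReal.continuous_rpow_const (y := θ)).tendsto 0 |>.comp (hmeas c hc0)
    rw [ENNReal.zero_rpow_of_pos hθ0] at h
    have := ENNReal.Tendsto.const_mul (a := C * B') h (Or.inr (ENNReal.mul_ne_top hC (by simp [hB'])))
    simpa using this
  obtain ⟨n, hn⟩ := ((ENNReal.tendsto_nhds_zero.mp hlim) (ENNReal.ofReal 4⁻¹) (by simp)).exists
  set S := {y | c < u n y} with hS
  have hSm : MeasurableSet S := (isOpen_lt continuous_const (hu n).continuous).measurableSet
  have hgB : eLpNorm (fderiv ℝ (u n)) (ENNReal.ofReal p) volume ≤ B' := by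
    rw [eLp_fun hp ((hu n).continuous_fderiv (by simp)) ((hc n).fderiv (𝕜 := ℝ))]
    refine ENNReal.ofReal_le_ofReal (Real.rpow_le_rpow (integral_nonneg fun x => by positivity)
      (hB n) (by positivity))
  have hone : eLpNorm (u n) (ENNReal.ofReal p) volume = 1 := by
    rw [eLp_fun hp (hu n).continuous (hc n)]
    simp only [Real.norm_eq_abs]
    rw [h1 n]; simp
  have hpart1 : eLpNorm (S.indicator (u n)) (ENNReal.ofReal p) volume ≤ ENNReal.ofReal 4⁻¹ := by
    rw [eLpNorm_indicator_eq_eLpNorm_restrict hSm]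
    have := eLpNorm_le_eLpNorm_mul_rpow_measure_univ (μ := volume.restrict S) (f := u n)
        (p := ENNReal.ofReal p) (q := q) ?_ (hu n).continuous.aestronglyMeasurable
    · rw [Measure.restrict_apply_univ] at this
      refine this.trans (le_trans ?_ hn)
      refine mul_le_mul_left ?_ _
      refine (eLpNorm_mono_measure _ Measure.restrict_le_self).trans ((hsob _ (hu n) (hs n)).trans ?_)
      exact mul_le_mul_right hgB _
    · rw [ENNReal.ofReal_le_iff_le_toReal (by simp)]; exact hpq.le
  have hpart2 : eLpNorm (Sᶜ.indicator (u n)) (ENNReal.ofReal p) volume ≤ ENNReal.ofReal 4⁻¹ := by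
    have hmono : eLpNorm (Sᶜ.indicator (u n)) (ENNReal.ofReal p) volume ≤
        eLpNorm (Ω.indicator (fun _ => c)) (ENNReal.ofReal p) volume := by
      refine eLpNorm_mono (fun y => ?_)
      by_cases hy : y ∈ S
      · rw [indicator_of_notMem (by simpa using hy)]; simp
      · rw [indicator_of_mem (by simpa using hy)]
        have hyc : u n y ≤ c := not_lt.mp hy
        by_cases hyΩ : y ∈ Ω
        · rw [indicator_of_mem hyΩ, Real.norm_of_nonneg (hu0 n y), Real.norm_of_nonneg hc0.le]
          exact hyc
        · rw [image_eq_zero_of_notMem_tsupport (fun h => hyΩ (hs n h))]; simp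
    refine hmono.trans ((eLpNorm_indicator_const_le _ _).trans ?_)
    rw [← ENNReal.ofReal_toReal hV, ← hVdef, ← ofReal_norm, Real.norm_of_nonneg hc0.le,
      ← ENNReal.ofReal_mul hc0.le]
    exact ENNReal.ofReal_le_ofReal hcV
  have hsum : eLpNorm (u n) (ENNReal.ofReal p) volume ≤ ENNReal.ofReal 4⁻¹ + ENNReal.ofReal 4⁻¹ := by
    have hadd := eLpNorm_add_le (μ := volume) (p := ENNReal.ofReal p)
      ((hu n).continuous.aestronglyMeasurable.indicator hSm)
      ((hu n).continuous.aestronglyMeasurable.indicator hSm.compl) (by simpa using hp.le)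
    rw [indicator_self_add_compl] at hadd
    exact hadd.trans (add_le_add hpart1 hpart2)
  rw [hone, ← ENNReal.ofReal_add (by norm_num) (by norm_num), ENNReal.one_le_ofReal] at hsum
  norm_num at hsum

theorem lam1_strict {N : ℕ} (hN : 2 ≤ N) {p : ℝ} (hp : 1 < p) {Ω Ω' : Set (EN N)} (ho : IsOpen Ω)
    (hb : Bornology.IsBounded Ω) (hconn : IsPreconnected Ω) (ho' : IsOpen Ω') (hne : Ω'.Nonempty)
    (hsub : Ω' ⊆ Ω) {x₀ : EN N} {r₀ : ℝ} (hr₀ : 0 < r₀) (hx₀ : x₀ ∈ Ω)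
    (hdis : ∀ y ∈ ball x₀ r₀, y ∉ Ω') : lam1 p Ω < lam1 p Ω' := by
  by_contra hcon
  rw [not_lt] at hcon
  have hex : ∀ n : ℕ, ∃ u : EN N → ℝ,
      ContDiff ℝ (⊤ : ℕ∞) u ∧ (∀ x, 0 ≤ u x) ∧ HasCompactSupport u ∧ tsupport u ⊆ Ω' ∧
      ∫ x, |u x| ^ p = 1 ∧ ∫ x, ‖fderiv ℝ u x‖ ^ p ≤ lam1 p Ω + 1 / ((n : ℝ) + 1) := by
    intro n
    refine near_min hp ho' hne ?_
    have : 0 < 1 / ((n : ℝ) + 1) := by positivity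
    linarith
  choose u hu hu0 hc hs h1 hQ using hex
  have hs' : ∀ n, tsupport (u n) ⊆ Ω := fun n => (hs n).trans hsub
  have hgood : Good u x₀ r₀ := by
    intro c hc0
    have : ∀ n, ball x₀ r₀ ∩ {y | c < u n y} = ∅ := by
      intro n
      rw [eq_empty_iff_forall_notMem]
      rintro y ⟨hy1, hy2⟩
      change c < u n y at hy2
      rw [image_eq_zero_of_notMem_tsupport (fun h => hdis y hy1 (hs n h))] at hy2
      linarith
    simp [this]
  have hall := good_all hp ho hconn hu hc hs' hu0 (ε := fun n : ℕ => 1 / ((n : ℝ) + 1))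
    tendsto_one_div_add_atTop_nhds_zero_nat
    (fun n => by rw [h1 n]; linarith [hQ n]) hx₀ hr₀ hgood
  refine no_vanish hN hp ho hb hu hc hs' hu0 h1 (B := lam1 p Ω + 1) ?_
    (fun c hc0 => tendsto_meas ho hb.measure_lt_top.ne hs' hall hc0)
  intro n
  refine (hQ n).trans ?_
  have : 1 / ((n : ℝ) + 1) ≤ 1 := by
    rw [div_le_one (by positivity)]; linarith [(Nat.cast_nonneg n : (0 : ℝ) ≤ n)]
  linarith

lemma inner_e1_self {N : ℕ} (hN : 2 ≤ N) : ‖e1 N‖ = 1 := by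
  have : e1 N = EuclideanSpace.single (⟨0, by omega⟩ : Fin N) (1 : ℝ) := by
    ext i
    simp [e1, Pi.single_apply, Fin.ext_iff]
  rw [this]; simp

lemma mem_Om {N : ℕ} (hN : 2 ≤ N) {R₀ R₁ s : ℝ} (hR₀ : 0 < R₀) (hR₁ : 0 < R₁) (y : EN N) :
    y ∈ Om N R₀ R₁ s ↔ ‖y‖ ^ 2 < R₁ ^ 2 ∧ R₀ ^ 2 < ‖y‖ ^ 2 - 2 * s * ⟪y, e1 N⟫ + s ^ 2 := by
  have h : ‖y‖ ^ 2 - 2 * s * ⟪y, e1 N⟫ + s ^ 2 = ‖y - s • e1 N‖ ^ 2 := by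
    rw [norm_sub_sq_real, norm_smul, inner_smul_right, inner_e1_self hN, mul_one, Real.norm_eq_abs,
      sq_abs]
    ring
  rw [h, Om, closure_ball _ hR₀.ne', mem_diff, mem_ball_zero_iff, mem_closedBall, dist_eq_norm, not_le,
    sq_lt_sq₀ (norm_nonneg _) hR₁.le, sq_lt_sq₀ hR₀.le (norm_nonneg _)]

lemma Om_open {N : ℕ} (R₀ R₁ s : ℝ) : IsOpen (Om N R₀ R₁ s) :=
  isOpen_ball.sdiff isClosed_closure

lemma exists_orth {N : ℕ} (hN : 2 ≤ N) : ∃ f : EN N, ‖f‖ = 1 ∧ ⟪f, e1 N⟫ = 0 := by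
  refine ⟨EuclideanSpace.single (⟨1, by omega⟩ : Fin N) (1 : ℝ), by simp, ?_⟩
  simp [EuclideanSpace.inner_single_left, e1]

lemma decomp {N : ℕ} (hN : 2 ≤ N) (y : EN N) : ∃ f : EN N, ‖f‖ = 1 ∧ ⟪f, e1 N⟫ = 0 ∧
    y = ⟪y, e1 N⟫ • e1 N + Real.sqrt (‖y‖ ^ 2 - ⟪y, e1 N⟫ ^ 2) • f := by
  have he := inner_e1_self hN
  set a := ⟪y, e1 N⟫ with ha
  have hee : ⟪e1 N, e1 N⟫ = 1 := by rw [real_inner_self_eq_norm_sq, he]; norm_num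
  have hn : ‖y - a • e1 N‖ ^ 2 = ‖y‖ ^ 2 - a ^ 2 := by
    rw [norm_sub_sq_real, norm_smul, inner_smul_right, he, mul_one, Real.norm_eq_abs, sq_abs, ← ha]
    ring
  rw [← hn, Real.sqrt_sq (norm_nonneg _)]
  by_cases h : y - a • e1 N = 0
  · obtain ⟨f, hf1, hf2⟩ := exists_orth hN
    refine ⟨f, hf1, hf2, ?_⟩
    rw [h, norm_zero, zero_smul, add_zero]
    exact sub_eq_zero.mp h
  · have hn0 : ‖y - a • e1 N‖ ≠ 0 := norm_ne_zero_iff.mpr h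
    refine ⟨‖y - a • e1 N‖⁻¹ • (y - a • e1 N), ?_, ?_, ?_⟩
    · rw [norm_smul, norm_inv, norm_norm, inv_mul_cancel₀ hn0]
    · rw [inner_smul_left, inner_sub_left, inner_smul_left, hee, ← ha]; simp
    · rw [smul_smul, mul_inv_cancel₀ hn0, one_smul]
      exact (add_sub_cancel _ _).symm

lemma Om_preconnected {N : ℕ} (hN : 2 ≤ N) {R₀ R₁ s : ℝ} (hR₀ : 0 < R₀) (hR : R₀ < R₁)
    (hs : 0 < s) : IsPreconnected (Om N R₀ R₁ s) := by
  have hR₁ : 0 < R₁ := by linarith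
  have he := inner_e1_self hN
  have hee : ⟪e1 N, e1 N⟫ = 1 := by rw [real_inner_self_eq_norm_sq, he]; norm_num
  set q : EN N := (-R₀) • e1 N with hq
  have hneg : ∀ t : ℝ, 0 ≤ t → ((-t) • e1 N ∈ Om N R₀ R₁ s ↔ t ^ 2 < R₁ ^ 2 ∧ R₀ ^ 2 < (t + s) ^ 2) := by
    intro t _
    rw [mem_Om hN hR₀ hR₁, norm_smul, he, mul_one, Real.norm_eq_abs, sq_abs, inner_smul_left, hee]
    simp only [conj_trivial, mul_one]
    rw [show (-t) ^ 2 - 2 * s * (-t) + s ^ 2 = (t + s) ^ 2 by ring, neg_sq]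
  have hqm : q ∈ Om N R₀ R₁ s := by
    rw [hq, hneg R₀ hR₀.le]; constructor <;> nlinarith
  refine isPreconnected_of_forall q (fun y hy => ?_)
  obtain ⟨f, hf1, hf2, hyf⟩ := decomp hN y
  set a := ⟪y, e1 N⟫ with ha
  set r := ‖y‖ with hr
  have har : |a| ≤ r := by
    have := abs_real_inner_le_norm y (e1 N)
    rwa [he, mul_one] at this
  obtain ⟨har1, har2⟩ := abs_le.mp har
  have hr0 : 0 ≤ r := norm_nonneg y
  -- the arc
  let γ : ℝ → EN N := fun b => b • e1 N + Real.sqrt (r ^ 2 - b ^ 2) • f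
  have hγc : Continuous γ := by fun_prop
  have hγin : ∀ b, ⟪γ b, e1 N⟫ = b := by
    intro b
    simp only [γ]
    rw [inner_add_left, inner_smul_left, inner_smul_left, hee, hf2]; simp
  have hγn : ∀ b, |b| ≤ r → ‖γ b‖ ^ 2 = r ^ 2 := by
    intro b hb
    have h0 : 0 ≤ r ^ 2 - b ^ 2 := by
      have := sq_le_sq' (abs_le.mp hb).1 (abs_le.mp hb).2
      linarith
    simp only [γ]
    rw [norm_add_sq_real, norm_smul, norm_smul, he, hf1, inner_smul_left, inner_smul_right,
      real_inner_comm, hf2, mul_one, mul_one, Real.norm_eq_abs, Real.norm_eq_abs, sq_abs, sq_abs,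
      Real.sq_sqrt h0]
    simp
  have hy' := (mem_Om hN hR₀ hR₁ y).mp hy
  have hγm : ∀ b ∈ Icc (-r) a, γ b ∈ Om N R₀ R₁ s := by
    intro b hb
    rw [mem_Om hN hR₀ hR₁, hγin, hγn b (abs_le.mpr ⟨hb.1, hb.2.trans har2⟩)]
    refine ⟨hy'.1, lt_of_lt_of_le hy'.2 ?_⟩
    have := mul_le_mul_of_nonneg_left hb.2 hs.le
    rw [← ha, ← hr]
    linarith
  have hγr : γ (-r) = (-r) • e1 N := by simp [γ]
  have hγa : γ a = y := hyf.symm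
  have hrm : (-r) • e1 N ∈ Om N R₀ R₁ s := hγr ▸ hγm (-r) ⟨le_rfl, har1⟩
  have hrm' := (hneg r hr0).mp hrm
  -- the segment on the axis
  let σ : ℝ → EN N := fun t => (-t) • e1 N
  have hσc : Continuous σ := by fun_prop
  have hσm : ∀ t ∈ uIcc R₀ r, σ t ∈ Om N R₀ R₁ s := by
    intro t ht
    have hq' := (hneg R₀ hR₀.le).mp hqm
    have hmin : 0 ≤ min R₀ r := le_min hR₀.le hr0
    have ht0 : 0 ≤ t := hmin.trans ht.1
    refine (hneg t ht0).mpr ⟨?_, ?_⟩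
    · rcases le_max_iff.mp ht.2 with h | h <;> nlinarith
    · rcases min_le_iff.mp ht.1 with h | h <;> nlinarith
  refine ⟨Set.image γ (Icc (-r) a) ∪ Set.image σ (uIcc R₀ r), ?_, ?_, ?_, ?_⟩
  · rintro z (⟨b, hb, rfl⟩ | ⟨t, ht, rfl⟩)
    · exact hγm b hb
    · exact hσm t ht
  · exact Or.inr ⟨R₀, left_mem_uIcc, rfl⟩
  · exact Or.inl ⟨a, ⟨har1, le_rfl⟩, hγa⟩
  · refine IsPreconnected.union ((-r) • e1 N) ⟨-r, ⟨le_rfl, har1⟩, hγr⟩ ⟨r, right_mem_uIcc, rfl⟩ ?_ ?_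
    · exact isPreconnected_Icc.image _ hγc.continuousOn
    · exact isPreconnected_uIcc.image _ hσc.continuousOn

lemma main_pair {N : ℕ} (hN : 2 ≤ N) {R₀ R₁ : ℝ} (hR₀ : 0 < R₀) (hR : R₀ < R₁)
    {p : ℝ} (hp : 1 < p) {s₁ s₂ : ℝ}
    (h1 : Real.sqrt (R₁ ^ 2 - R₀ ^ 2) ≤ s₁) (h12 : s₁ < s₂) (h2 : s₂ ≤ R₁ + R₀) :
    Om N R₀ R₁ s₁ ⊂ Om N R₀ R₁ s₂ ∧ lam1 p (Om N R₀ R₁ s₂) < lam1 p (Om N R₀ R₁ s₁) := by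
  have hR₁ : 0 < R₁ := by linarith
  have hd : 0 < R₁ ^ 2 - R₀ ^ 2 := by nlinarith
  have hs1 : 0 < s₁ := lt_of_lt_of_le (Real.sqrt_pos.mpr hd) h1
  have hs1sq : R₁ ^ 2 - R₀ ^ 2 ≤ s₁ ^ 2 := (Real.sqrt_le_left hs1.le).mp h1
  have he := inner_e1_self hN
  have hee : ⟪e1 N, e1 N⟫ = 1 := by rw [real_inner_self_eq_norm_sq, he]; norm_num
  have hax : ∀ s t : ℝ, t • e1 N ∈ Om N R₀ R₁ s ↔ t ^ 2 < R₁ ^ 2 ∧ R₀ ^ 2 < (t - s) ^ 2 := by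
    intro s t
    rw [mem_Om hN hR₀ hR₁, norm_smul, he, mul_one, Real.norm_eq_abs, sq_abs, inner_smul_left, hee]
    simp only [conj_trivial, mul_one]
    rw [show t ^ 2 - 2 * s * t + s ^ 2 = (t - s) ^ 2 by ring]
  have hsub : Om N R₀ R₁ s₁ ⊆ Om N R₀ R₁ s₂ := by
    intro y hy
    rw [mem_Om hN hR₀ hR₁] at hy ⊢
    refine ⟨hy.1, ?_⟩
    set a := ⟪y, e1 N⟫
    have ha : a < s₁ := by
      by_contra hcon
      rw [not_lt] at hcon
      nlinarith [hy.1, hy.2, mul_le_mul_of_nonneg_left hcon hs1.le]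
    nlinarith [hy.2]
  -- a point of the difference, interior to the removed ball
  obtain ⟨ε, hε0, hε1, hε2, hε3⟩ : ∃ ε : ℝ, 0 < ε ∧ ε < 2 * R₀ ∧ ε < s₂ - s₁ ∧ ε < R₁ - (s₁ - R₀) := by
    refine ⟨min (2 * R₀) (min (s₂ - s₁) (R₁ - (s₁ - R₀))) / 2, ?_, ?_, ?_, ?_⟩
    · have : 0 < min (2 * R₀) (min (s₂ - s₁) (R₁ - (s₁ - R₀))) :=
        lt_min (by linarith) (lt_min (by linarith) (by linarith))
      linarith
    all_goals
      have a1 : 0 < min (2 * R₀) (min (s₂ - s₁) (R₁ - (s₁ - R₀))) :=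
        lt_min (by linarith) (lt_min (by linarith) (by linarith))
      have a2 := min_le_left (2 * R₀) (min (s₂ - s₁) (R₁ - (s₁ - R₀)))
      have a3 := min_le_right (2 * R₀) (min (s₂ - s₁) (R₁ - (s₁ - R₀)))
      have a4 := min_le_left (s₂ - s₁) (R₁ - (s₁ - R₀))
      have a5 := min_le_right (s₂ - s₁) (R₁ - (s₁ - R₀))
      linarith
  set x₀ : EN N := (s₁ - R₀ + ε) • e1 N with hx₀
  have hx₀2 : x₀ ∈ Om N R₀ R₁ s₂ := by
    rw [hx₀, hax]
    constructor
    · exact sq_lt_sq' (by linarith) (by linarith)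
    · nlinarith
  have hx₀b : x₀ ∈ ball (s₁ • e1 N) R₀ := by
    rw [mem_ball, dist_eq_norm, hx₀, ← sub_smul, norm_smul, he, mul_one, Real.norm_eq_abs, abs_lt]
    constructor <;> linarith
  obtain ⟨r₀, hr₀, hball⟩ := Metric.isOpen_iff.mp isOpen_ball x₀ hx₀b
  have hdis : ∀ y ∈ ball x₀ r₀, y ∉ Om N R₀ R₁ s₁ := fun y hy h => h.2 (subset_closure (hball hy))
  refine ⟨⟨hsub, fun h => hdis x₀ (mem_ball_self hr₀) (h hx₀2)⟩, ?_⟩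
  refine lam1_strict hN hp (Om_open R₀ R₁ s₂) (isBounded_ball.subset diff_subset)
    (Om_preconnected hN hR₀ hR (by linarith)) (Om_open R₀ R₁ s₁) ?_ hsub hr₀ hx₀2 hdis
  refine ⟨(-R₀) • e1 N, ?_⟩
  rw [hax]
  constructor <;> nlinarith

end helpers

theorem stmt16 (N : ℕ) (hN : 2 ≤ N) (R₀ R₁ : ℝ) (hR₀ : 0 < R₀) (hR : R₀ < R₁)
    (p : ℝ) (hp : 1 < p) (s₁ s₂ : ℝ)
    (h1 : Real.sqrt (R₁ ^ 2 - R₀ ^ 2) ≤ s₁) (h12 : s₁ < s₂) (h2 : s₂ ≤ R₁ + R₀) :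
    Om N R₀ R₁ s₁ ⊂ Om N R₀ R₁ s₂ ∧
    lam1 p (Om N R₀ R₁ s₂) < lam1 p (Om N R₀ R₁ s₁) ∧
    StrictAntiOn (fun s : ℝ => lam1 p (Om N R₀ R₁ s))
      (Set.Icc (Real.sqrt (R₁ ^ 2 - R₀ ^ 2)) (R₁ + R₀)) := by
  refine ⟨(main_pair hN hR₀ hR hp h1 h12 h2).1, (main_pair hN hR₀ hR hp h1 h12 h2).2, ?_⟩
  intro a ha b hb hab
  exact (main_pair hN hR₀ hR hp ha.1 hab hb.2).2
end

section
/- Let N ≥ 2, 0 < R₀ < R₁, p ∈ (1,∞), and let x, y ∈ ℝ^N with ‖x − y‖ ≤ R₁ − R₀ (so that the ball B_{R₀}(y) is contained in B_{R₁}(x)). Then λ₁(p, B_{R₁}(x) \ closure(B_{R₀}(y))) ≤ λ₁(p, B_{R₁}(0) \ closure(B_{R₀}(0))), i.e. the first eigenvalue of the eccentric spherical shell is at most that of the concentric spherical shell with the same radii. -/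
open MeasureTheory Metric Set Filter
open scoped RealInnerProductSpace ENNReal Topology

lemma aux_F : ∃ F : ℝ → ℝ, ContDiff ℝ (⊤ : ℕ∞) F ∧ (∀ t, 0 ≤ deriv F t ∧ deriv F t ≤ 1) ∧
    (∀ t, t ≤ 1 → F t = 0) ∧ (∀ t, 0 ≤ F t) ∧ (∀ t, t - 2 ≤ F t) ∧ (∀ t, 0 ≤ t → F t ≤ t) := by
  have hc : Continuous (fun r : ℝ => Real.smoothTransition (r - 1)) :=
    Real.smoothTransition.continuous.comp (by fun_prop)
  set F : ℝ → ℝ := fun t => ∫ r in (0:ℝ)..t, Real.smoothTransition (r - 1) with hF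
  have hd : ∀ t, HasDerivAt F (Real.smoothTransition (t - 1)) t := fun t =>
    intervalIntegral.integral_hasDerivAt_right (hc.intervalIntegrable _ _)
      (hc.stronglyMeasurableAtFilter _ _) hc.continuousAt
  have hdiff : Differentiable ℝ F := fun t => (hd t).differentiableAt
  have hder : deriv F = fun r : ℝ => Real.smoothTransition (r - 1) := funext fun t => (hd t).deriv
  have hmono : Monotone F := monotone_of_deriv_nonneg hdiff
    (fun t => by rw [hder]; exact Real.smoothTransition.nonneg _)
  have hzero : ∀ t, t ≤ 1 → F t = 0 := by
    intro t ht
    have : F t = ∫ r in (0:ℝ)..t, (0:ℝ) := by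
      apply intervalIntegral.integral_congr
      intro r hr
      have : r ≤ 1 := by
        rcases (Set.mem_uIcc.1 hr) with h | h <;> linarith [h.1, h.2]
      exact Real.smoothTransition.zero_of_nonpos (by linarith)
    simpa using this
  have hnn : ∀ t, 0 ≤ F t := by
    intro t
    rcases le_total t 1 with h | h
    · exact (hzero t h).ge
    · rw [← hzero 1 le_rfl]; exact hmono h
  refine ⟨F, ?_, ?_, hzero, hnn, ?_, ?_⟩
  · have : ContDiff ℝ ((⊤ : ℕ∞) : WithTop ℕ∞) F := by
      rw [contDiff_infty_iff_deriv]
      refine ⟨hdiff, ?_⟩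
      rw [hder]
      exact Real.smoothTransition.contDiff.comp (contDiff_id.sub contDiff_const)
    exact this
  · intro t
    rw [hder]
    exact ⟨Real.smoothTransition.nonneg _, Real.smoothTransition.le_one _⟩
  · intro t
    rcases le_total t 2 with h | h
    · linarith [hnn t]
    · have h1 : F t = F 2 + ∫ r in (2:ℝ)..t, Real.smoothTransition (r - 1) :=
        (intervalIntegral.integral_add_adjacent_intervals (hc.intervalIntegrable _ _)
          (hc.intervalIntegrable _ _)).symm
      have h2 : ∫ r in (2:ℝ)..t, Real.smoothTransition (r - 1) = ∫ r in (2:ℝ)..t, (1:ℝ) := by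
        apply intervalIntegral.integral_congr
        intro r hr
        rw [Set.uIcc_of_le h] at hr
        exact Real.smoothTransition.one_of_one_le (by linarith [hr.1])
      rw [h2] at h1
      simp at h1
      linarith [hnn 2]
  · intro t ht
    have hm : Monotone (fun t => t - F t) := by
      apply monotone_of_deriv_nonneg (differentiable_id.sub hdiff)
      intro s
      have := ((hasDerivAt_id s).sub (hd s)).deriv
      have h2 := Real.smoothTransition.le_one (s - 1)
      change 0 ≤ deriv (id - F) s
      rw [this]; linarith
    have := hm ht
    simp only [hzero 0 zero_le_one] at this
    linarith

structure GoodG (ε : ℝ) (g : ℝ → ℝ) : Prop where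
  smooth : ContDiff ℝ (⊤ : ℕ∞) g
  der : ∀ t, |deriv g t| ≤ 1
  even : ∀ t, g (-t) = g t
  zero : ∀ t, |t| ≤ ε → g t = 0
  nonneg : ∀ t, 0 ≤ g t
  lower : ∀ t, |t| - 2 * ε ≤ g t
  upper : ∀ t, g t ≤ |t|

lemma exists_goodG (ε : ℝ) (hε : 0 < ε) : ∃ g, GoodG ε g := by
  obtain ⟨F, hs, hd, h0, hn, hl, hu⟩ := aux_F
  have hdiff : Differentiable ℝ F := hs.differentiable (by simp)
  have key : ∀ t, 0 ≤ t → F (-t) = 0 := fun t ht => h0 _ (by linarith)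
  have habs : ∀ t : ℝ, ε * (F (t / ε) + F (-t / ε)) = ε * F (|t| / ε) := by
    intro t
    rcases le_total 0 t with h | h
    · rw [abs_of_nonneg h, h0 (-t / ε) (by rw [div_le_one hε]; linarith)]; ring
    · rw [abs_of_nonpos h, h0 (t / ε) (by rw [div_le_one hε]; linarith)]; ring
  refine ⟨fun t => ε * (F (t / ε) + F (-t / ε)), ?_, ?_, ?_, ?_, ?_, ?_, ?_⟩
  · exact contDiff_const.mul ((hs.comp (contDiff_id.div_const ε)).add
      (hs.comp (contDiff_id.neg.div_const ε)))
  · intro t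
    have h1 : HasDerivAt (fun t => ε * (F (t / ε) + F (-t / ε)))
        (ε * (deriv F (t / ε) * (1 / ε) + deriv F (-t / ε) * (-1 / ε))) t := by
      apply HasDerivAt.const_mul
      apply HasDerivAt.add
      · exact (hdiff _).hasDerivAt.comp t ((hasDerivAt_id t).div_const ε)
      · exact (hdiff (-t / ε)).hasDerivAt.comp t ((hasDerivAt_id t).neg.div_const ε)
    rw [h1.deriv]
    have : ε * (deriv F (t / ε) * (1 / ε) + deriv F (-t / ε) * (-1 / ε)) =
      deriv F (t / ε) - deriv F (-t / ε) := by field_simp; ring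
    rw [this, abs_le]
    constructor <;> linarith [hd (t / ε), hd (-t / ε), (hd (t / ε)).1, (hd (-t / ε)).1,
      (hd (t / ε)).2, (hd (-t / ε)).2]
  · intro t
    simp only [neg_neg]; ring
  · intro t ht
    show ε * (F (t / ε) + F (-t / ε)) = 0
    rw [habs, h0 _ (by rw [div_le_one hε]; exact ht), mul_zero]
  · intro t
    have := hn (t / ε); have := hn (-t / ε); positivity
  · intro t
    show _ ≤ ε * (F (t / ε) + F (-t / ε))
    rw [habs]
    have := mul_le_mul_of_nonneg_left (hl (|t| / ε)) hε.le
    have h2 : ε * (|t| / ε - 2) = |t| - 2 * ε := by field_simp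
    linarith
  · intro t
    show ε * (F (t / ε) + F (-t / ε)) ≤ _
    rw [habs]
    have := mul_le_mul_of_nonneg_left (hu (|t| / ε) (by positivity)) hε.le
    have h2 : ε * (|t| / ε) = |t| := by field_simp
    linarith

lemma GoodG.der_odd {ε : ℝ} {g : ℝ → ℝ} (h : GoodG ε g) (t : ℝ) : deriv g (-t) = - deriv g t := by
  have h1 : deriv (fun s => g (-s)) t = deriv g t := by
    congr 1; exact funext h.even
  rw [deriv_comp_neg] at h1
  linarith

lemma conv_ineq {F : Type*} [NormedAddCommGroup F] [NormedSpace ℝ F] (A B : F) (c p : ℝ)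
    (hc : |c| ≤ 1) (hp : 1 < p) :
    ‖(1/2 : ℝ) • (A + B) + (c/2) • (A - B)‖ ^ p + ‖(1/2 : ℝ) • (A + B) - (c/2) • (A - B)‖ ^ p
      ≤ ‖A‖ ^ p + ‖B‖ ^ p := by
  have key : ∀ c : ℝ, |c| ≤ 1 → ‖(1/2 : ℝ) • (A + B) + (c/2) • (A - B)‖ ^ p ≤
      ((1 + c)/2) * ‖A‖ ^ p + ((1 - c)/2) * ‖B‖ ^ p := by
    intro c hc
    obtain ⟨h1, h2⟩ := abs_le.1 hc
    have e : (1/2 : ℝ) • (A + B) + (c/2) • (A - B) = ((1 + c)/2) • A + ((1 - c)/2) • B := by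
      module
    have n : ‖(1/2 : ℝ) • (A + B) + (c/2) • (A - B)‖ ≤ ((1 + c)/2) * ‖A‖ + ((1 - c)/2) * ‖B‖ := by
      rw [e]
      refine (norm_add_le _ _).trans ?_
      rw [norm_smul, norm_smul, Real.norm_of_nonneg (by linarith), Real.norm_of_nonneg (by linarith)]
    refine (Real.rpow_le_rpow (norm_nonneg _) n (by linarith)).trans ?_
    have := (convexOn_rpow hp.le).2 (norm_nonneg A) (norm_nonneg B)
      (show 0 ≤ (1 + c)/2 by linarith) (show 0 ≤ (1 - c)/2 by linarith) (by ring)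
    simpa using this
  have h1 := key c hc
  have h2 := key (-c) (by rwa [abs_neg])
  have e2 : (1/2 : ℝ) • (A + B) - (c/2) • (A - B) = (1/2 : ℝ) • (A + B) + (-c/2) • (A - B) := by
    module
  rw [e2]
  linarith

structure GoodRefl {N : ℕ} (x y : EuclideanSpace ℝ (Fin N))
    (σ : EuclideanSpace ℝ (Fin N) → EuclideanSpace ℝ (Fin N))
    (L : EuclideanSpace ℝ (Fin N) ≃ₗᵢ[ℝ] EuclideanSpace ℝ (Fin N)) : Prop where
  der : ∀ z, HasFDerivAt σ (L.toContinuousLinearEquiv : EuclideanSpace ℝ (Fin N) →L[ℝ] EuclideanSpace ℝ (Fin N)) z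
  smooth : ContDiff ℝ (⊤ : ℕ∞) σ
  inv : ∀ z, σ (σ z) = z
  linv : ∀ z, L (L z) = z
  iso : Isometry σ
  dx : ∀ z, dist (σ z) x = dist z y
  dy : ∀ z, dist (σ z) y = dist z x
  fix : ∀ z, dist z x = dist z y → σ z = z
  mp : MeasurePreserving σ volume volume

lemma exists_goodRefl {N : ℕ} (x y : EuclideanSpace ℝ (Fin N)) : ∃ σ L, GoodRefl x y σ L := by
  set L := (ℝ ∙ (x - y))ᗮ.reflection with hL
  set m := (1/2 : ℝ) • (x + y) with hm
  have hLd : L (x - y) = -(x - y) :=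
    Submodule.reflection_orthogonalComplement_singleton_eq_neg (x - y)
  have hLL : ∀ z, L (L z) = z := fun z => Submodule.reflection_reflection _ z
  have hx : x - m = (1/2 : ℝ) • (x - y) := by rw [hm]; module
  have hy : y - m = -((1/2 : ℝ) • (x - y)) := by rw [hm]; module
  have hsx : m + L (x - m) = y := by
    rw [hx, map_smul, hLd, hm]; module
  have hsy : m + L (y - m) = x := by
    rw [hy, map_neg, map_smul, hLd, hm]; module
  have hiso : Isometry (fun z => m + L (z - m)) := by
    apply Isometry.of_dist_eq
    intro a b
    simp
  have hinv : ∀ z, m + L ((m + L (z - m)) - m) = z := by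
    intro z
    rw [add_sub_cancel_left, hLL]; abel
  refine ⟨fun z => m + L (z - m), L, ?_, ?_, hinv, hLL, hiso, ?_, ?_, ?_, ?_⟩
  · intro z
    have h1 := (L.toContinuousLinearEquiv : EuclideanSpace ℝ (Fin N) →L[ℝ] EuclideanSpace ℝ (Fin N)).hasFDerivAt.comp z
      ((hasFDerivAt_id z).sub_const m)
    have h2 := h1.const_add m
    simpa using h2
  · exact contDiff_const.add (L.contDiff.comp (contDiff_id.sub contDiff_const))
  · intro z
    have := hiso.dist_eq z y
    simp only [hsy] at this
    exact this
  · intro z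
    have := hiso.dist_eq z x
    simp only [hsx] at this
    exact this
  · intro z hz
    have hmem : z - m ∈ (ℝ ∙ (x - y))ᗮ := by
      rw [Submodule.mem_orthogonal_singleton_iff_inner_right]
      have h1 : ‖z - x‖ ^ 2 = ‖z - y‖ ^ 2 := by
        rw [← dist_eq_norm, ← dist_eq_norm, hz]
      have e1 : z - x = (z - m) - (1/2 : ℝ) • (x - y) := by rw [← hx]; abel
      have e2 : z - y = (z - m) + (1/2 : ℝ) • (x - y) := by rw [hm]; module
      rw [e1, e2, @norm_sub_sq_real, @norm_add_sq_real, inner_smul_right] at h1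
      rw [real_inner_comm]
      linarith
    simp only [hL]
    rw [Submodule.reflection_mem_subspace_eq_self hmem]
    abel
  · exact (measurePreserving_add_left volume m).comp
      (L.measurePreserving.comp (measurePreserving_sub_right volume m))

lemma GoodRefl.integral {N : ℕ} {x y : EuclideanSpace ℝ (Fin N)} {σ L} (h : GoodRefl x y σ L)
    (f : EuclideanSpace ℝ (Fin N) → ℝ) : ∫ z, f (σ z) = ∫ z, f z :=
  h.mp.integral_comp h.iso.isClosedEmbedding.measurableEmbedding f

lemma GoodRefl.integrable {N : ℕ} {x y : EuclideanSpace ℝ (Fin N)} {σ L} (h : GoodRefl x y σ L)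
    {f : EuclideanSpace ℝ (Fin N) → ℝ} (hf : Integrable f) : Integrable (fun z => f (σ z)) :=
  h.mp.integrable_comp_of_integrable hf

lemma GoodRefl.fderiv {N : ℕ} {x y : EuclideanSpace ℝ (Fin N)} {σ L} (h : GoodRefl x y σ L)
    {u : EuclideanSpace ℝ (Fin N) → ℝ} (hu : Differentiable ℝ u) (z : EuclideanSpace ℝ (Fin N)) :
    fderiv ℝ (fun z => u (σ z)) z = (fderiv ℝ u (σ z)).comp
      (L.toContinuousLinearEquiv : EuclideanSpace ℝ (Fin N) →L[ℝ] EuclideanSpace ℝ (Fin N)) :=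
  ((hu (σ z)).hasFDerivAt.comp z (h.der z)).fderiv

lemma comp_norm {N : ℕ} (L : EuclideanSpace ℝ (Fin N) ≃ₗᵢ[ℝ] EuclideanSpace ℝ (Fin N))
    (A : EuclideanSpace ℝ (Fin N) →L[ℝ] ℝ) :
    ‖A.comp (L.toContinuousLinearEquiv : EuclideanSpace ℝ (Fin N) →L[ℝ] EuclideanSpace ℝ (Fin N))‖ = ‖A‖ :=
  ContinuousLinearMap.opNorm_comp_linearIsometryEquiv A L

lemma norm_grad {N : ℕ} (u : EuclideanSpace ℝ (Fin N) → ℝ) (z : EuclideanSpace ℝ (Fin N)) :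
    ‖gradient u z‖ = ‖fderiv ℝ u z‖ := by
  simp [gradient]

lemma int_cpt {N : ℕ} {p : ℝ} (hp : 1 < p) {F : Type*} [NormedAddCommGroup F]
    {f : EuclideanSpace ℝ (Fin N) → F} (hf : Continuous f) (hc : HasCompactSupport f) :
    Integrable (fun z => ‖f z‖ ^ p) := by
  apply Continuous.integrable_of_hasCompactSupport
  · exact hf.norm.rpow_const (fun _ => Or.inr (by linarith))
  · exact hc.comp_left (g := fun v => ‖v‖ ^ p) (by simp [Real.zero_rpow (by linarith : p ≠ 0)])

lemma int_mono_der {N : ℕ} {p : ℝ} (hp : 1 < p)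
    {u v : EuclideanSpace ℝ (Fin N) → ℝ} (hu : ContDiff ℝ (⊤ : ℕ∞) u) (hc : HasCompactSupport u)
    (hv : ContDiff ℝ (⊤ : ℕ∞) v) (hcv : HasCompactSupport v)
    (h : ∀ z, ‖fderiv ℝ v z‖ ≤ ‖fderiv ℝ u z‖) :
    ∫ z, ‖fderiv ℝ v z‖ ^ p ≤ ∫ z, ‖fderiv ℝ u z‖ ^ p := by
  apply integral_mono (int_cpt hp (hv.continuous_fderiv (by simp)) (hcv.fderiv ℝ))
    (int_cpt hp (hu.continuous_fderiv (by simp)) (hc.fderiv ℝ))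
  intro z
  exact Real.rpow_le_rpow (norm_nonneg _) (h z) (by linarith)

lemma comp_g_fderiv {N : ℕ} {ε : ℝ} {g : ℝ → ℝ} (hg : GoodG ε g)
    {u : EuclideanSpace ℝ (Fin N) → ℝ} (hu : ContDiff ℝ (⊤ : ℕ∞) u) (z : EuclideanSpace ℝ (Fin N)) :
    fderiv ℝ (fun z => g (u z)) z = deriv g (u z) • fderiv ℝ u z :=
  ((hg.smooth.differentiable (by simp) (u z)).hasDerivAt.comp_hasFDerivAt z
    (hu.differentiable (by simp) z).hasFDerivAt).fderiv

lemma comp_g_le {N : ℕ} {ε : ℝ} {g : ℝ → ℝ} (hg : GoodG ε g)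
    {u : EuclideanSpace ℝ (Fin N) → ℝ} (hu : ContDiff ℝ (⊤ : ℕ∞) u) (z : EuclideanSpace ℝ (Fin N)) :
    ‖fderiv ℝ (fun z => g (u z)) z‖ ≤ ‖fderiv ℝ u z‖ := by
  rw [comp_g_fderiv hg hu, norm_smul]
  exact mul_le_of_le_one_left (norm_nonneg _) (hg.der _)

lemma GoodG.at_zero {ε : ℝ} {g : ℝ → ℝ} (hg : GoodG ε g) : g 0 = 0 := by
  have h1 := hg.upper 0
  have h2 := hg.nonneg 0
  simp at h1; linarith

/-- side function -/
noncomputable def tau {N : ℕ} (x y z : EuclideanSpace ℝ (Fin N)) : ℝ :=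
  if dist z x ≤ dist z y then 1 else -1

/-- smooth polarization -/
noncomputable def pol {N : ℕ} (x y : EuclideanSpace ℝ (Fin N))
    (σ : EuclideanSpace ℝ (Fin N) → EuclideanSpace ℝ (Fin N)) (g : ℝ → ℝ)
    (U : EuclideanSpace ℝ (Fin N) → ℝ) (z : EuclideanSpace ℝ (Fin N)) : ℝ :=
  (1/2) * (U z + U (σ z)) + (tau x y z / 2) * g (U z - U (σ z))

lemma pol_eventually {N : ℕ} {x y : EuclideanSpace ℝ (Fin N)} {σ L} (h : GoodRefl x y σ L)
    {ε : ℝ} (hε : 0 < ε) {g : ℝ → ℝ} (hg : GoodG ε g)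
    {U : EuclideanSpace ℝ (Fin N) → ℝ} (hU : Continuous U) (z : EuclideanSpace ℝ (Fin N)) :
    pol x y σ g U =ᶠ[𝓝 z] fun z' =>
      (1/2) * (U z' + U (σ z')) + (tau x y z / 2) * g (U z' - U (σ z')) := by
  have hcσ : Continuous σ := h.iso.continuous
  by_cases hw : dist z x = dist z y
  · have h0 : U z - U (σ z) = 0 := by rw [h.fix z hw, sub_self]
    have hcont : Continuous (fun z => |U z - U (σ z)|) := by fun_prop
    have : ∀ᶠ z' in 𝓝 z, |U z' - U (σ z')| < ε := by
      apply hcont.continuousAt.eventually_lt continuousAt_const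
      simpa [h0] using hε
    filter_upwards [this] with z' hz'
    simp [pol, hg.zero _ hz'.le]
  · have : ∀ᶠ z' in 𝓝 z, tau x y z' = tau x y z := by
      rcases lt_or_gt_of_ne hw with hlt | hlt
      · have : ∀ᶠ z' in 𝓝 z, dist z' x < dist z' y :=
          ContinuousAt.eventually_lt (by fun_prop) (by fun_prop) hlt
        filter_upwards [this] with z' hz'
        simp [tau, hz'.le, hlt.le]
      · have : ∀ᶠ z' in 𝓝 z, dist z' y < dist z' x :=
          ContinuousAt.eventually_lt (by fun_prop) (by fun_prop) hlt
        filter_upwards [this] with z' hz'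
        simp [tau, hz'.not_ge, hlt.not_ge]
    filter_upwards [this] with z' hz'
    simp [pol, hz']

lemma pol_smooth {N : ℕ} {x y : EuclideanSpace ℝ (Fin N)} {σ L} (h : GoodRefl x y σ L)
    {ε : ℝ} (hε : 0 < ε) {g : ℝ → ℝ} (hg : GoodG ε g)
    {U : EuclideanSpace ℝ (Fin N) → ℝ} (hU : ContDiff ℝ (⊤ : ℕ∞) U) :
    ContDiff ℝ (⊤ : ℕ∞) (pol x y σ g U) := by
  rw [contDiff_iff_contDiffAt]
  intro z
  refine ContDiffAt.congr_of_eventuallyEq ?_ (pol_eventually h hε hg hU.continuous z)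
  have hV : ContDiff ℝ (⊤ : ℕ∞) (fun z => U (σ z)) := hU.comp h.smooth
  exact ((contDiff_const.mul (hU.add hV)).add
    (contDiff_const.mul (hg.smooth.comp (hU.sub hV)))).contDiffAt

lemma pol_fderiv {N : ℕ} {x y : EuclideanSpace ℝ (Fin N)} {σ L} (h : GoodRefl x y σ L)
    {ε : ℝ} (hε : 0 < ε) {g : ℝ → ℝ} (hg : GoodG ε g)
    {U : EuclideanSpace ℝ (Fin N) → ℝ} (hU : ContDiff ℝ (⊤ : ℕ∞) U) (z : EuclideanSpace ℝ (Fin N)) :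
    fderiv ℝ (pol x y σ g U) z =
      (1/2 : ℝ) • (fderiv ℝ U z + fderiv ℝ (fun z => U (σ z)) z) +
      ((tau x y z * deriv g (U z - U (σ z))) / 2) •
        (fderiv ℝ U z - fderiv ℝ (fun z => U (σ z)) z) := by
  rw [(pol_eventually h hε hg hU.continuous z).fderiv_eq]
  have hV : ContDiff ℝ (⊤ : ℕ∞) (fun z => U (σ z)) := hU.comp h.smooth
  have dU := (hU.differentiable (by simp) z).hasFDerivAt
  have dV := (hV.differentiable (by simp) z).hasFDerivAt
  have dg := (hg.smooth.differentiable (by simp) (U z - U (σ z))).hasDerivAt.comp_hasFDerivAt z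
    (dU.sub dV)
  have := ((dU.add dV).const_mul (1/2 : ℝ)).add (dg.const_mul (tau x y z / 2))
  refine this.fderiv.trans ?_
  rw [smul_smul]
  congr 2
  ring

lemma tau_sigma {N : ℕ} {x y : EuclideanSpace ℝ (Fin N)} {σ L} (h : GoodRefl x y σ L)
    (z : EuclideanSpace ℝ (Fin N)) (hne : σ z ≠ z) : tau x y (σ z) = - tau x y z := by
  have hd : dist z x ≠ dist z y := fun e => hne (h.fix z e)
  unfold tau
  rw [h.dx, h.dy]
  rcases lt_or_gt_of_ne hd with hlt | hlt
  · simp [hlt.le, hlt.not_ge]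
  · simp [hlt.le, hlt.not_ge]

lemma tau_abs {N : ℕ} (x y z : EuclideanSpace ℝ (Fin N)) : |tau x y z| = 1 := by
  unfold tau; split_ifs <;> simp

lemma pol_pointwise {N : ℕ} {x y : EuclideanSpace ℝ (Fin N)} {σ L} (h : GoodRefl x y σ L)
    {ε : ℝ} (hε : 0 < ε) {g : ℝ → ℝ} (hg : GoodG ε g) {p : ℝ} (hp : 1 < p)
    {U : EuclideanSpace ℝ (Fin N) → ℝ} (hU : ContDiff ℝ (⊤ : ℕ∞) U) (z : EuclideanSpace ℝ (Fin N)) :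
    ‖fderiv ℝ (pol x y σ g U) z‖ ^ p + ‖fderiv ℝ (pol x y σ g U) (σ z)‖ ^ p ≤
      ‖fderiv ℝ U z‖ ^ p + ‖fderiv ℝ U (σ z)‖ ^ p := by
  have hUd : Differentiable ℝ U := hU.differentiable (by simp)
  set A := fderiv ℝ U z with hA
  set B := fderiv ℝ (fun z => U (σ z)) z with hB
  have hBn : ‖fderiv ℝ U (σ z)‖ = ‖B‖ := by
    rw [hB, h.fderiv hUd, comp_norm]
  set c := tau x y z * deriv g (U z - U (σ z)) with hc
  have hc1 : |c| ≤ 1 := by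
    rw [hc, abs_mul, tau_abs, one_mul]; exact hg.der _
  have hBσ : fderiv ℝ U (σ z) = B.comp
      (L.toContinuousLinearEquiv : EuclideanSpace ℝ (Fin N) →L[ℝ] EuclideanSpace ℝ (Fin N)) := by
    rw [hB, h.fderiv hUd]
    ext v
    simp [h.linv]
  have hAσ : fderiv ℝ (fun z => U (σ z)) (σ z) = A.comp
      (L.toContinuousLinearEquiv : EuclideanSpace ℝ (Fin N) →L[ℝ] EuclideanSpace ℝ (Fin N)) := by
    rw [h.fderiv hUd, h.inv]
  have hcσ : tau x y (σ z) * deriv g (U (σ z) - U (σ (σ z))) = c := by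
    rw [h.inv, ← neg_sub (U z) (U (σ z)), hg.der_odd, hc]
    by_cases hf : σ z = z
    · have : deriv g 0 = 0 := by
        have := hg.der_odd 0
        simp at this; linarith
      rw [hf, sub_self, this]; simp
    · rw [tau_sigma h z hf]; ring
  have e1 := pol_fderiv h hε hg hU z
  have e2 := pol_fderiv h hε hg hU (σ z)
  rw [hcσ, hBσ, hAσ] at e2
  have e3 : fderiv ℝ (pol x y σ g U) (σ z) = ((1/2 : ℝ) • (A + B) - (c/2) • (A - B)).comp
      (L.toContinuousLinearEquiv : EuclideanSpace ℝ (Fin N) →L[ℝ] EuclideanSpace ℝ (Fin N)) := by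
    rw [e2]
    ext v
    simp
    ring
  rw [e1, e3, comp_norm, hBn]
  exact conv_ineq A B c p hc1 hp

lemma pol_cpt {N : ℕ} {x y : EuclideanSpace ℝ (Fin N)} {σ L} (h : GoodRefl x y σ L)
    {ε : ℝ} {g : ℝ → ℝ} (hg : GoodG ε g)
    {U : EuclideanSpace ℝ (Fin N) → ℝ} (hc : HasCompactSupport U) :
    HasCompactSupport (pol x y σ g U) := by
  have hV : HasCompactSupport (fun z => U (σ z)) := hc.comp_isClosedEmbedding h.iso.isClosedEmbedding
  have h1 : HasCompactSupport (fun z => (1/2) * (U z + U (σ z))) := (hc.add hV).mul_left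
  have h2 : HasCompactSupport (fun z => (tau x y z / 2) * g (U z - U (σ z))) :=
    ((hc.sub hV).comp_left (g := g) hg.at_zero).mul_left
  exact h1.add h2

lemma pol_integral {N : ℕ} {x y : EuclideanSpace ℝ (Fin N)} {σ L} (h : GoodRefl x y σ L)
    {ε : ℝ} (hε : 0 < ε) {g : ℝ → ℝ} (hg : GoodG ε g) {p : ℝ} (hp : 1 < p)
    {U : EuclideanSpace ℝ (Fin N) → ℝ} (hU : ContDiff ℝ (⊤ : ℕ∞) U) (hc : HasCompactSupport U) :
    ∫ z, ‖fderiv ℝ (pol x y σ g U) z‖ ^ p ≤ ∫ z, ‖fderiv ℝ U z‖ ^ p := by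
  have i1 := int_cpt hp ((pol_smooth h hε hg hU).continuous_fderiv (by simp))
    ((pol_cpt h hg hc).fderiv ℝ)
  have i2 := int_cpt hp (hU.continuous_fderiv (by simp)) (hc.fderiv ℝ)
  have := integral_mono (i1.add (h.integrable i1)) (i2.add (h.integrable i2))
    (fun z => pol_pointwise h hε hg hp hU z)
  simp only [Pi.add_apply] at this
  rw [integral_add i1 (h.integrable i1), integral_add i2 (h.integrable i2),
    h.integral (fun z => ‖fderiv ℝ (pol x y σ g U) z‖ ^ p),
    h.integral (fun z => ‖fderiv ℝ U z‖ ^ p)] at this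
  linarith

/-- exact polarization of `|u|` -/
noncomputable def polAbs {N : ℕ} (x y : EuclideanSpace ℝ (Fin N))
    (σ : EuclideanSpace ℝ (Fin N) → EuclideanSpace ℝ (Fin N))
    (u : EuclideanSpace ℝ (Fin N) → ℝ) (z : EuclideanSpace ℝ (Fin N)) : ℝ :=
  if dist z x ≤ dist z y then max |u z| |u (σ z)| else min |u z| |u (σ z)|

lemma polAbs_nonneg {N : ℕ} (x y : EuclideanSpace ℝ (Fin N)) (σ u z) :
    0 ≤ polAbs (N := N) x y σ u z := by
  unfold polAbs; split_ifs
  · exact le_max_of_le_left (abs_nonneg _)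
  · exact le_min (abs_nonneg _) (abs_nonneg _)

lemma polAbs_le {N : ℕ} (x y : EuclideanSpace ℝ (Fin N)) (σ u z) :
    polAbs (N := N) x y σ u z ≤ |u z| + |u (σ z)| := by
  have h1 := abs_nonneg (u z)
  have h2 := abs_nonneg (u (σ z))
  unfold polAbs; split_ifs
  · exact max_le (by linarith) (by linarith)
  · exact (min_le_left _ _).trans (by linarith)

lemma bound_int {N : ℕ} {x y : EuclideanSpace ℝ (Fin N)} {σ L} (h : GoodRefl x y σ L)
    {p : ℝ} (hp : 1 < p) {u : EuclideanSpace ℝ (Fin N) → ℝ} (hu : ContDiff ℝ (⊤ : ℕ∞) u)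
    (hc : HasCompactSupport u) : Integrable (fun z => (|u z| + |u (σ z)|) ^ p) := by
  have hV : HasCompactSupport (fun z => u (σ z)) := hc.comp_isClosedEmbedding h.iso.isClosedEmbedding
  have hcu := hu.continuous
  have hcσ : Continuous σ := h.iso.continuous
  have h1 : HasCompactSupport (fun z => |u z| + |u (σ z)|) :=
    HasCompactSupport.add (hc.comp_left (g := fun t : ℝ => |t|) abs_zero)
      (hV.comp_left (g := fun t : ℝ => |t|) abs_zero)
  have := int_cpt hp (f := fun z => |u z| + |u (σ z)|) (by fun_prop) h1
  refine this.congr (Eventually.of_forall fun z => ?_)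
  simp only
  rw [Real.norm_of_nonneg (by positivity)]

lemma polAbs_integral {N : ℕ} {x y : EuclideanSpace ℝ (Fin N)} {σ L} (h : GoodRefl x y σ L)
    {p : ℝ} (hp : 1 < p) {u : EuclideanSpace ℝ (Fin N) → ℝ} (hu : ContDiff ℝ (⊤ : ℕ∞) u)
    (hc : HasCompactSupport u) : ∫ z, (polAbs x y σ u z) ^ p = ∫ z, |u z| ^ p := by
  have hcu := hu.continuous
  have hcσ : Continuous σ := h.iso.continuous
  have hm : Measurable (polAbs x y σ u) := by
    apply Measurable.ite
    · exact measurableSet_le (by fun_prop) (by fun_prop)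
    · exact (show Continuous fun z => max |u z| |u (σ z)| by fun_prop).measurable
    · exact (show Continuous fun z => min |u z| |u (σ z)| by fun_prop).measurable
  have i1 : Integrable (fun z => (polAbs x y σ u z) ^ p) := by
    refine (bound_int h hp hu hc).mono' (hm.pow_const p).aestronglyMeasurable
      (Eventually.of_forall fun z => ?_)
    rw [Real.norm_of_nonneg (Real.rpow_nonneg (polAbs_nonneg _ _ _ _ _) _)]
    exact Real.rpow_le_rpow (polAbs_nonneg _ _ _ _ _) (polAbs_le _ _ _ _ _) (by linarith)
  have i2 : Integrable (fun z => |u z| ^ p) := int_cpt hp hcu hc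
  have key : ∀ z, (polAbs x y σ u z) ^ p + (polAbs x y σ u (σ z)) ^ p =
      |u z| ^ p + |u (σ z)| ^ p := by
    intro z
    unfold polAbs
    rw [h.dx, h.dy, h.inv]
    rcases lt_trichotomy (dist z x) (dist z y) with hlt | heq | hlt
    · rw [if_pos hlt.le, if_neg hlt.not_ge]
      rcases le_total |u z| |u (σ z)| with h1 | h1 <;> simp [h1, add_comm]
    · rw [if_pos heq.le, if_pos heq.ge, h.fix z heq]; simp
    · rw [if_neg hlt.not_ge, if_pos hlt.le]
      rcases le_total |u z| |u (σ z)| with h1 | h1 <;> simp [h1, add_comm]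
  have e1 := integral_add i1 (h.integrable i1)
  have e2 := integral_add i2 (h.integrable i2)
  rw [h.integral (fun z => (polAbs x y σ u z) ^ p)] at e1
  rw [h.integral (fun z => |u z| ^ p)] at e2
  have e3 : ∫ z, ((polAbs x y σ u z) ^ p + (polAbs x y σ u (σ z)) ^ p) =
      ∫ z, (|u z| ^ p + |u (σ z)| ^ p) := by
    congr 1; exact funext key
  linarith

lemma approx {N : ℕ} {x y : EuclideanSpace ℝ (Fin N)} {σ L} (h : GoodRefl x y σ L)
    {p : ℝ} (hp : 1 < p) {u : EuclideanSpace ℝ (Fin N) → ℝ} (hu : ContDiff ℝ (⊤ : ℕ∞) u)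
    (hc : HasCompactSupport u) {R₀ R₁ : ℝ}
    (hs : tsupport u ⊆ ball x R₁ \ closedBall x R₀) {ε : ℝ} (hε : 0 < ε) :
    ∃ Z : EuclideanSpace ℝ (Fin N) → ℝ, ContDiff ℝ (⊤ : ℕ∞) Z ∧ HasCompactSupport Z ∧
      tsupport Z ⊆ ball x R₁ \ closedBall y R₀ ∧
      ∫ z, ‖fderiv ℝ Z z‖ ^ p ≤ ∫ z, ‖fderiv ℝ u z‖ ^ p ∧
      (∀ z, |Z z - polAbs x y σ u z| ≤ 9 * ε) ∧ (∀ z, 0 ≤ Z z) ∧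
      (∀ z, Z z ≤ |u z| + |u (σ z)|) := by
  obtain ⟨g, hg⟩ := exists_goodG ε hε
  obtain ⟨g2, hg2⟩ := exists_goodG (2 * ε) (by positivity)
  set U : EuclideanSpace ℝ (Fin N) → ℝ := fun z => g (u z) with hUdef
  have hU : ContDiff ℝ (⊤ : ℕ∞) U := hg.smooth.comp hu
  have hUc : HasCompactSupport U := hc.comp_left hg.at_zero
  set W := pol x y σ g U with hWdef
  have hW : ContDiff ℝ (⊤ : ℕ∞) W := pol_smooth h hε hg hU
  have hWc : HasCompactSupport W := pol_cpt h hg hUc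
  have hU0 : ∀ z, 0 ≤ U z := fun z => hg.nonneg _
  have hUu : ∀ z, U z ≤ |u z| := fun z => hg.upper _
  have hUl : ∀ z, |u z| - 2 * ε ≤ U z := fun z => hg.lower _
  have hUs : ∀ z, 0 < U z → z ∈ ball x R₁ \ closedBall x R₀ := by
    intro z hz
    apply hs
    apply subset_tsupport
    intro h0
    simp only [hUdef, h0, hg.at_zero] at hz
    exact lt_irrefl _ hz
  -- formulas for W
  have hWp : ∀ z, dist z x ≤ dist z y → W z = (1/2) * (U z + U (σ z)) + (1 / 2) * g (U z - U (σ z)) := by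
    intro z hz; simp only [hWdef, pol, tau, if_pos hz]
  have hWn : ∀ z, ¬ dist z x ≤ dist z y →
      W z = (1/2) * (U z + U (σ z)) - (1 / 2) * g (U z - U (σ z)) := by
    intro z hz; simp only [hWdef, pol, tau, if_neg hz]; ring
  have hW0 : ∀ z, 0 ≤ W z := by
    intro z
    have h1 := hg.nonneg (U z - U (σ z))
    have h2 := hg.upper (U z - U (σ z))
    have h3 := hU0 z
    have h4 := hU0 (σ z)
    have h5 : |U z - U (σ z)| ≤ U z + U (σ z) := abs_le.2 ⟨by linarith, by linarith⟩
    by_cases hz : dist z x ≤ dist z y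
    · rw [hWp z hz]; linarith
    · rw [hWn z hz]; linarith
  have hWu : ∀ z, W z ≤ U z + U (σ z) := by
    intro z
    have h1 := hg.nonneg (U z - U (σ z))
    have h2 := hg.upper (U z - U (σ z))
    have h3 := hU0 z
    have h4 := hU0 (σ z)
    have h5 : |U z - U (σ z)| ≤ U z + U (σ z) := abs_le.2 ⟨by linarith, by linarith⟩
    by_cases hz : dist z x ≤ dist z y
    · rw [hWp z hz]; linarith
    · rw [hWn z hz]; linarith
  have hWP : ∀ z, |W z - polAbs x y σ u z| ≤ 5 * ε := by
    intro z
    have h1 := hg.lower (U z - U (σ z))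
    have h2 := hg.upper (U z - U (σ z))
    have a1 := hUu z
    have a2 := hUu (σ z)
    have a3 := hUl z
    have a4 := hUl (σ z)
    by_cases hz : dist z x ≤ dist z y
    · rw [hWp z hz, polAbs, if_pos hz, abs_le]
      rcases le_total |u z| |u (σ z)| with hm | hm <;>
      rcases abs_cases (U z - U (σ z)) with ⟨hb, _⟩ | ⟨hb, _⟩ <;>
      rw [hb] at h1 h2 <;> simp only [max_eq_left hm, max_eq_right hm] <;>
      constructor <;> linarith
    · rw [hWn z hz, polAbs, if_neg hz, abs_le]
      rcases le_total |u z| |u (σ z)| with hm | hm <;>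
      rcases abs_cases (U z - U (σ z)) with ⟨hb, _⟩ | ⟨hb, _⟩ <;>
      rw [hb] at h1 h2 <;> simp only [min_eq_left hm, min_eq_right hm] <;>
      constructor <;> linarith
  refine ⟨fun z => g2 (W z), hg2.smooth.comp hW, hWc.comp_left hg2.at_zero, ?_, ?_, ?_,
    fun z => hg2.nonneg _, ?_⟩
  · have hclosed : IsClosed {z | 2 * ε ≤ W z} := isClosed_le continuous_const hW.continuous
    have hsub : tsupport (fun z => g2 (W z)) ⊆ {z | 2 * ε ≤ W z} := by
      apply closure_minimal _ hclosed
      intro z hz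
      by_contra hlt
      simp only [mem_setOf_eq, not_le] at hlt
      exact hz (hg2.zero _ (by rw [abs_of_nonneg (hW0 z)]; exact hlt.le))
    refine hsub.trans ?_
    intro z hz
    have hz' : 2 * ε ≤ W z := hz
    have hσ : 0 < U (σ z) → dist z y < R₁ ∧ R₀ < dist z y := by
      intro hp
      have := hUs _ hp
      simp only [mem_diff, mem_ball, mem_closedBall, not_le, h.dx] at this
      exact this
    have hid : 0 < U z → dist z x < R₁ ∧ R₀ < dist z x := by
      intro hp
      have := hUs _ hp
      simp only [mem_diff, mem_ball, mem_closedBall, not_le] at this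
      exact this
    simp only [mem_diff, mem_ball, mem_closedBall, not_le]
    by_cases hd : dist z x ≤ dist z y
    · have : 0 < U z ∨ 0 < U (σ z) := by
        by_contra hcon
        push Not at hcon
        linarith [hWu z, hcon.1, hcon.2]
      rcases this with hp | hp
      · exact ⟨(hid hp).1, lt_of_lt_of_le (hid hp).2 hd⟩
      · exact ⟨lt_of_le_of_lt hd (hσ hp).1, (hσ hp).2⟩
    · rw [hWn z hd] at hz'
      have h1 := hg.lower (U z - U (σ z))
      have h2 := le_abs_self (U z - U (σ z))
      have h3 := neg_abs_le (U z - U (σ z))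
      have p1 : 0 < U z := by linarith
      have p2 : 0 < U (σ z) := by linarith
      exact ⟨(hid p1).1, (hσ p2).2⟩
  · calc ∫ z, ‖fderiv ℝ (fun z => g2 (W z)) z‖ ^ p ≤ ∫ z, ‖fderiv ℝ W z‖ ^ p :=
          int_mono_der hp hW hWc (hg2.smooth.comp hW) (hWc.comp_left hg2.at_zero)
            (comp_g_le hg2 hW)
      _ ≤ ∫ z, ‖fderiv ℝ U z‖ ^ p := pol_integral h hε hg hp hU hUc
      _ ≤ ∫ z, ‖fderiv ℝ u z‖ ^ p := int_mono_der hp hu hc hU hUc (comp_g_le hg hu)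
  · intro z
    have h1 := hg2.lower (W z)
    have h2 := hg2.upper (W z)
    rw [abs_of_nonneg (hW0 z)] at h1 h2
    obtain ⟨h3, h4⟩ := abs_le.1 (hWP z)
    rw [abs_le]
    constructor <;> linarith
  · intro z
    have h2 := hg2.upper (W z)
    rw [abs_of_nonneg (hW0 z)] at h2
    linarith [hWu z, hUu z, hUu (σ z)]

lemma set_int {N : ℕ} {p : ℝ} (hp : 1 < p) {u : EuclideanSpace ℝ (Fin N) → ℝ}
    {Ω : Set (EuclideanSpace ℝ (Fin N))} (hs : tsupport u ⊆ Ω) :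
    (∫ x in Ω, ‖gradient u x‖ ^ p) / (∫ x in Ω, |u x| ^ p) =
    (∫ x, ‖fderiv ℝ u x‖ ^ p) / (∫ x, |u x| ^ p) := by
  have h0 : p ≠ 0 := by linarith
  congr 1
  · simp only [norm_grad]
    apply setIntegral_eq_integral_of_forall_compl_eq_zero
    intro z hz
    have : fderiv ℝ u z = 0 := by
      by_contra hne
      exact hz (hs (support_fderiv_subset ℝ hne))
    rw [this, norm_zero, Real.zero_rpow h0]
  · apply setIntegral_eq_integral_of_forall_compl_eq_zero
    intro z hz
    rw [image_eq_zero_of_notMem_tsupport (fun hz' => hz (hs hz')), abs_zero, Real.zero_rpow h0]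

lemma lam1_le {N : ℕ} {p : ℝ} (hp : 1 < p) {u : EuclideanSpace ℝ (Fin N) → ℝ}
    {Ω : Set (EuclideanSpace ℝ (Fin N))} (hu : ContDiff ℝ (⊤ : ℕ∞) u) (hne : u ≠ 0)
    (hc : HasCompactSupport u) (hs : tsupport u ⊆ Ω) :
    lam1 p Ω ≤ (∫ x, ‖fderiv ℝ u x‖ ^ p) / (∫ x, |u x| ^ p) := by
  refine csInf_le ⟨0, ?_⟩ ⟨u, hu, hne, hc, hs, (set_int hp hs).symm⟩
  rintro r ⟨v, -, -, -, -, rfl⟩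
  apply div_nonneg
  · exact integral_nonneg fun z => Real.rpow_nonneg (norm_nonneg _) _
  · exact integral_nonneg fun z => Real.rpow_nonneg (abs_nonneg _) _

lemma main_ineq {N : ℕ} (x y : EuclideanSpace ℝ (Fin N))
    {p : ℝ} (hp : 1 < p) {u : EuclideanSpace ℝ (Fin N) → ℝ} (hu : ContDiff ℝ (⊤ : ℕ∞) u)
    (hc : HasCompactSupport u) (hne : u ≠ 0) {R₀ R₁ : ℝ}
    (hs : tsupport u ⊆ ball x R₁ \ closedBall x R₀) :
    lam1 p (ball x R₁ \ closedBall y R₀) ≤ (∫ x, ‖fderiv ℝ u x‖ ^ p) / (∫ x, |u x| ^ p) := by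
  obtain ⟨σ, L, h⟩ := exists_goodRefl x y
  have hp0 : p ≠ 0 := by linarith
  choose Z hZ hZc hZs hZi hZP hZ0 hZu using fun n : ℕ =>
    approx h hp hu hc hs (ε := 1 / ((n : ℝ) + 1)) (by positivity)
  have hpos : 0 < ∫ z, |u z| ^ p := by
    obtain ⟨z, hz⟩ := Function.ne_iff.1 hne
    apply Continuous.integral_pos_of_hasCompactSupport_nonneg_nonzero (x := z)
    · exact hu.continuous.abs.rpow_const (fun _ => Or.inr (by linarith))
    · exact hc.comp_left (g := fun v : ℝ => |v| ^ p) (by simp [Real.zero_rpow hp0])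
    · intro z; exact Real.rpow_nonneg (abs_nonneg _) _
    · exact (Real.rpow_pos_of_pos (abs_pos.2 hz) _).ne'
  have hlim : Tendsto (fun n => ∫ z, |Z n z| ^ p) atTop (𝓝 (∫ z, |u z| ^ p)) := by
    rw [← polAbs_integral h hp hu hc]
    apply tendsto_integral_of_dominated_convergence (fun z => (|u z| + |u (σ z)|) ^ p)
    · intro n
      exact ((hZ n).continuous.abs.rpow_const
        (fun _ => Or.inr (by linarith))).aestronglyMeasurable
    · exact bound_int h hp hu hc
    · intro n
      refine Eventually.of_forall fun z => ?_
      rw [Real.norm_of_nonneg (Real.rpow_nonneg (abs_nonneg _) _), abs_of_nonneg (hZ0 n z)]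
      exact Real.rpow_le_rpow (hZ0 n z) (hZu n z) (by linarith)
    · refine Eventually.of_forall fun z => ?_
      have : Tendsto (fun n => Z n z) atTop (𝓝 (polAbs x y σ u z)) := by
        rw [tendsto_iff_dist_tendsto_zero]
        refine squeeze_zero (fun n => dist_nonneg) (fun n => hZP n z) ?_
        simpa using (tendsto_one_div_add_atTop_nhds_zero_nat (𝕜 := ℝ)).const_mul 9
      have h2 := this.abs
      rw [abs_of_nonneg (polAbs_nonneg _ _ _ _ _)] at h2
      exact h2.rpow_const (Or.inr (by linarith))
  have hlim2 := (tendsto_const_nhds (x := ∫ x, ‖fderiv ℝ u x‖ ^ p)).div hlim hpos.ne'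
  refine ge_of_tendsto hlim2 ?_
  filter_upwards [hlim.eventually (lt_mem_nhds hpos)] with n hn
  have hZne : Z n ≠ 0 := by
    intro h0
    simp [h0, Real.zero_rpow hp0] at hn
  exact (lam1_le hp (hZ n) hZne (hZc n) (hZs n)).trans
    (div_le_div_of_nonneg_right (hZi n) hn.le)

theorem stmt17 (N : ℕ) (hN : 2 ≤ N) (R₀ R₁ : ℝ) (hR₀ : 0 < R₀) (hR : R₀ < R₁)
    (p : ℝ) (hp : 1 < p) (x y : EuclideanSpace ℝ (Fin N)) (hxy : ‖x - y‖ ≤ R₁ - R₀) :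
    lam1 p (ball x R₁ \ closure (ball y R₀)) ≤
      lam1 p (ball (0 : EuclideanSpace ℝ (Fin N)) R₁ \ closure (ball 0 R₀)) := by
  rw [closure_ball y hR₀.ne', closure_ball 0 hR₀.ne']
  apply le_csInf
  · set e : EuclideanSpace ℝ (Fin N) := EuclideanSpace.single ⟨0, by omega⟩ ((R₀ + R₁) / 2) with he
    have hn : ‖e‖ = (R₀ + R₁) / 2 := by
      rw [he, EuclideanSpace.norm_single, Real.norm_of_nonneg (by linarith)]
    have hmem : e ∈ ball (0 : EuclideanSpace ℝ (Fin N)) R₁ \ closedBall 0 R₀ := by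
      simp only [mem_diff, mem_ball, mem_closedBall, dist_zero_right, hn]
      constructor <;> linarith
    have hopen : IsOpen (ball (0 : EuclideanSpace ℝ (Fin N)) R₁ \ closedBall 0 R₀) :=
      isOpen_ball.sdiff isClosed_closedBall
    obtain ⟨f, hf1, hf2, hf3, -, hf5⟩ :=
      exists_contDiff_tsupport_subset (n := (⊤ : ℕ∞)) (hopen.mem_nhds hmem)
    refine ⟨_, f, hf3, ?_, hf2, hf1, rfl⟩
    intro h0
    simp [h0] at hf5
  · rintro r ⟨u, hu, hne, hc, hs, rfl⟩
    rw [set_int hp hs]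
    have hfd : ∀ z, fderiv ℝ (fun z => u (z - x)) z = fderiv ℝ u (z - x) :=
      fun z => by
        simpa [sub_eq_add_neg] using fderiv_comp_add_right (𝕜 := ℝ) (f := u) (x := z) (-x)
    have e1 : ∫ z, ‖fderiv ℝ (fun z => u (z - x)) z‖ ^ p = ∫ z, ‖fderiv ℝ u z‖ ^ p := by
      simp only [hfd]
      exact integral_sub_right_eq_self (fun z => ‖fderiv ℝ u z‖ ^ p) x
    have e2 : ∫ z, |u (z - x)| ^ p = ∫ z, |u z| ^ p :=
      integral_sub_right_eq_self (fun z => |u z| ^ p) x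
    rw [← e1, ← e2]
    refine main_ineq x y hp (hu.comp (contDiff_id.sub contDiff_const))
      (hc.comp_homeomorph (Homeomorph.subRight x)) ?_ ?_
    · obtain ⟨z, hz⟩ := Function.ne_iff.1 hne
      apply Function.ne_iff.2
      exact ⟨z + x, by simpa using hz⟩
    · intro z hz
      have hz' : z - x ∈ tsupport u :=
        tsupport_comp_subset_preimage u (f := fun z => z - x) (by fun_prop) hz
      have := hs hz'
      simpa [dist_eq_norm] using this
end

section
/- Let N ≥ 2 and 0 < R₀ < R₁. Then there exist s ∈ (0, R₁ − R₀) and a nonempty open set D ⊆ Ω_s such that μH^{N−1}(∂D) · vol(Ω_s) < μH^{N−1}(∂Ω_s) · vol(D), where ∂ denotes the topological boundary; that is, the relative perimeter-to-volume ratio of D is strictly smaller than that of the eccentric annulus Ω_s itself (so Ω_s is not a Cheeger set of itself). -/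
open MeasureTheory Metric Set Filter
open scoped RealInnerProductSpace ENNReal Topology

section Aux
open Module

variable {E : Type*} [NormedAddCommGroup E] [InnerProductSpace ℝ E] [FiniteDimensional ℝ E]
  [MeasurableSpace E] [BorelSpace E]

/-- Hausdorff measure on the hyperplane orthogonal to a nonzero vector is Haar. -/
theorem aux_haar (n : ℕ) (hn : finrank ℝ E = n + 1) (e : E) (he : ‖e‖ = 1) :
    (μH[(n : ℝ)] : Measure (ℝ ∙ e)ᗮ).IsAddHaarMeasure := by
  haveI : Fact (finrank ℝ E = n + 1) := ⟨hn⟩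
  have h := Submodule.finrank_orthogonal_span_singleton (𝕜 := ℝ) (n := n) (v := e)
    (by intro h; simp [h] at he)
  rw [← h]
  infer_instance

theorem aux_disc (n : ℕ) (hn : finrank ℝ E = n + 1) (e : E) (he : ‖e‖ = 1)
    (a t ρ r : ℝ) (hr : 0 < r) (hρ : 0 < ρ) (h : r ^ 2 + (t - a) ^ 2 ≤ ρ ^ 2) :
    ENNReal.ofReal (r ^ n) * μH[(n : ℝ)] (ball (0 : (ℝ ∙ e)ᗮ) 1) ≤
      μH[(n : ℝ)] {x : E | ⟪e, x⟫ = t ∧ ‖x - a • e‖ < ρ} := by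
  haveI := aux_haar n hn e he
  haveI : Fact (finrank ℝ E = n + 1) := ⟨hn⟩
  have hf := Submodule.finrank_orthogonal_span_singleton (𝕜 := ℝ) (n := n) (v := e)
    (by intro h; simp [h] at he)
  have h1 := Measure.addHaar_ball_of_pos (μH[(n : ℝ)] : Measure (ℝ ∙ e)ᗮ) 0 hr
  rw [hf] at h1
  rw [← h1]
  have hiso : Isometry (fun y : (ℝ ∙ e)ᗮ => t • e + (y : E)) :=
    Isometry.of_dist_eq (fun x y => by simp [Subtype.dist_eq])
  rw [← hiso.hausdorffMeasure_image (Or.inl (Nat.cast_nonneg n))]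
  apply measure_mono
  rintro _ ⟨y, hy, rfl⟩
  have hy0 : ⟪e, (y : E)⟫ = 0 := Submodule.mem_orthogonal_singleton_iff_inner_right.1 y.2
  have hee : ⟪e, e⟫ = (1 : ℝ) := by rw [real_inner_self_eq_norm_sq, he]; norm_num
  refine ⟨by simp [inner_add_right, inner_smul_right, hy0, hee, he], ?_⟩
  have hy' : ‖(y : E)‖ < r := by simpa using hy
  have : t • e + (y : E) - a • e = (t - a) • e + (y : E) := by rw [sub_smul]; abel
  rw [this]
  have h2 : ‖(t - a) • e + (y : E)‖ ^ 2 = (t - a) ^ 2 + ‖(y : E)‖ ^ 2 := by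
    rw [norm_add_sq_real, inner_smul_left, hy0, norm_smul, he]; simp
  apply lt_of_pow_lt_pow_left₀ 2 hρ.le
  rw [h2]
  nlinarith [norm_nonneg (y : E)]

theorem aux_cap (n : ℕ) (e : E) (he : ‖e‖ = 1)
    (a t ρ : ℝ) (hat : a ≤ t) :
    μH[(n : ℝ)] {x : E | ⟪e, x⟫ = t ∧ ‖x - a • e‖ < ρ} ≤
      μH[(n : ℝ)] (sphere (a • e) ρ ∩ {x : E | t < ⟪e, x⟫}) := by
  have hee : ⟪e, e⟫ = (1 : ℝ) := by rw [real_inner_self_eq_norm_sq, he]; norm_num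
  let P : E → E := fun x => x + (t - ⟪e, x⟫) • e
  have hP : LipschitzWith 1 P := by
    apply LipschitzWith.of_dist_le_mul
    intro x y
    have h0 : P x - P y = (x - y) - ⟪e, x - y⟫ • e := by
      simp only [P, inner_sub_right]; module
    rw [dist_eq_norm, dist_eq_norm, h0]
    simp only [NNReal.coe_one, one_mul]
    apply le_of_sq_le_sq _ (norm_nonneg _)
    rw [norm_sub_sq_real, inner_smul_right, real_inner_comm, norm_smul, he, mul_one,
      Real.norm_eq_abs, sq_abs]
    nlinarith [sq_nonneg ⟪x - y, e⟫]
  have h1 := hP.hausdorffMeasure_image_le (d := (n : ℝ)) (Nat.cast_nonneg n)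
    (sphere (a • e) ρ ∩ {x : E | t < ⟪e, x⟫})
  simp only [ENNReal.coe_one, ENNReal.one_rpow, one_mul] at h1
  refine le_trans (measure_mono ?_) h1
  rintro x ⟨hx, hxρ⟩
  have hρ : 0 < ρ := (norm_nonneg _).trans_lt hxρ
  -- lift
  set w : E := x - t • e with hw
  have hew : ⟪e, w⟫ = 0 := by rw [hw, inner_sub_right, inner_smul_right, hee, hx]; ring
  have hxa : x - a • e = (t - a) • e + w := by rw [hw]; module
  have h2 : ‖x - a • e‖ ^ 2 = (t - a) ^ 2 + ‖w‖ ^ 2 := by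
    rw [hxa, norm_add_sq_real, inner_smul_left, hew, norm_smul, he]; simp
  have h3 : (t - a) ^ 2 + ‖w‖ ^ 2 < ρ ^ 2 := by
    rw [← h2]; exact pow_lt_pow_left₀ hxρ (norm_nonneg _) (by norm_num)
  set q := Real.sqrt (ρ ^ 2 - ‖w‖ ^ 2) with hq
  have hq2 : q ^ 2 = ρ ^ 2 - ‖w‖ ^ 2 := Real.sq_sqrt (by nlinarith [sq_nonneg (t - a)])
  have hqt : t - a < q := by
    apply Real.lt_sqrt_of_sq_lt; linarith
  refine ⟨(a + q) • e + w, ⟨?_, ?_⟩, ?_⟩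
  · rw [mem_sphere_iff_norm]
    have : (a + q) • e + w - a • e = q • e + w := by module
    rw [this]
    have h4 : ‖q • e + w‖ ^ 2 = ρ ^ 2 := by
      rw [norm_add_sq_real, inner_smul_left, hew, norm_smul, he]; simp [hq2]
    exact (pow_left_inj₀ (norm_nonneg _) hρ.le (by norm_num)).1 h4
  · simp only [mem_setOf_eq, inner_add_right, inner_smul_right, hee, hew]
    linarith
  · simp only [P, inner_add_right, inner_smul_right, hee, hew]
    rw [hw]
    module

theorem aux_sphere (n : ℕ) (hn : finrank ℝ E = n + 1) (c : E) (R : ℝ) (hR : 0 < R) :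
    μH[(n : ℝ)] (sphere c R) < ∞ := by
  have htr : sphere c R = (fun x : E => c + x) '' sphere 0 R := by
    ext x; simp [mem_sphere_iff_norm, sub_eq_neg_add]
  have hiso : Isometry (fun x : E => c + x) := isometry_add_left c
  rw [htr, hiso.hausdorffMeasure_image (Or.inl (Nat.cast_nonneg n))]
  apply (isCompact_sphere (0 : E) R).measure_lt_top_of_nhdsWithin
  intro x hx
  have hxR : ‖x‖ = R := by simpa using hx
  set e : E := R⁻¹ • x with hedef
  have he : ‖e‖ = 1 := by
    rw [hedef, norm_smul, hxR, norm_inv, Real.norm_of_nonneg hR.le, inv_mul_cancel₀ hR.ne']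
  have hxe : x = R • e := by rw [hedef, smul_smul, mul_inv_cancel₀ hR.ne', one_smul]
  have hee : ⟪e, e⟫ = (1 : ℝ) := by rw [real_inner_self_eq_norm_sq, he]; norm_num
  haveI := aux_haar n hn e he
  let φ : (ℝ ∙ e)ᗮ → E := fun y => (y : E) + Real.sqrt (R ^ 2 - ‖y‖ ^ 2) • e
  have hφ : ContDiffAt ℝ 1 φ 0 := by
    have h1 : ContDiffAt ℝ 1 (fun y : (ℝ ∙ e)ᗮ => (y : E)) 0 :=
      ((ℝ ∙ e)ᗮ.subtypeL).contDiff.contDiffAt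
    have h2 : ContDiffAt ℝ 1 (fun y : (ℝ ∙ e)ᗮ => Real.sqrt (R ^ 2 - ‖y‖ ^ 2)) 0 := by
      apply ContDiffAt.sqrt
      · exact (contDiff_const.sub (contDiff_norm_sq ℝ)).contDiffAt
      · simp [hR.ne']
    exact h1.add (h2.smul contDiffAt_const)
  obtain ⟨K, U, hU, hL⟩ := hφ.exists_lipschitzOnWith
  have hL' : LipschitzOnWith K φ (U ∩ ball 0 1) := hL.mono inter_subset_left
  have hU' : U ∩ ball 0 1 ∈ 𝓝 (0 : (ℝ ∙ e)ᗮ) := inter_mem hU (ball_mem_nhds _ one_pos)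
  let ψ : E → (ℝ ∙ e)ᗮ := fun z => (ℝ ∙ e)ᗮ.orthogonalProjectionOnto z
  have hψ : Continuous ψ := ((ℝ ∙ e)ᗮ.orthogonalProjectionOnto).continuous
  have hψz : ∀ z, ((ψ z : (ℝ ∙ e)ᗮ) : E) = z - ⟪e, z⟫ • e := by
    intro z
    have h := Submodule.starProjection_orthogonal_val (𝕜 := ℝ) (K := ℝ ∙ e) z
    rw [Submodule.starProjection_unit_singleton ℝ he] at h
    exact h
  have hψx : ψ x = 0 := by
    apply Subtype.ext
    rw [hψz, hxe, inner_smul_right, hee]; simp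
  have hn1 : ψ ⁻¹' (U ∩ ball 0 1) ∈ 𝓝 x := hψ.continuousAt.preimage_mem_nhds (by rwa [hψx])
  have hn2 : {z : E | 0 < ⟪e, z⟫} ∈ 𝓝 x := by
    apply (isOpen_lt continuous_const (by fun_prop)).mem_nhds
    simp [hxe, inner_smul_right, hee, he, hR]
  refine ⟨φ '' (U ∩ ball 0 1), ?_, ?_⟩
  · rw [mem_nhdsWithin_iff_exists_mem_nhds_inter]
    refine ⟨_, inter_mem hn1 hn2, ?_⟩
    rintro z ⟨⟨hz1, hz2⟩, hz3⟩
    refine ⟨ψ z, hz1, ?_⟩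
    have hzR : ‖z‖ = R := by simpa using hz3
    have hnorm : ‖ψ z‖ ^ 2 = R ^ 2 - ⟪e, z⟫ ^ 2 := by
      rw [Submodule.coe_norm, hψz, norm_sub_sq_real, inner_smul_right, real_inner_comm,
        norm_smul, he, hzR]
      simp; ring
    simp only [φ, hnorm, hψz]
    rw [sub_sub_cancel, Real.sqrt_sq (le_of_lt hz2)]
    module
  · refine (hL'.hausdorffMeasure_image_le (Nat.cast_nonneg n)).trans_lt ?_
    apply ENNReal.mul_lt_top
    · exact ENNReal.rpow_lt_top_of_nonneg (Nat.cast_nonneg n) ENNReal.coe_ne_top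
    · exact (measure_mono inter_subset_right).trans_lt measure_ball_lt_top

theorem aux_frontier (e : E) (he : ‖e‖ = 1) (R₀ R₁ s : ℝ) (hR₀ : 0 < R₀)
    (hs : 0 < s) (hsR : s + R₀ < R₁) :
    frontier (ball (0 : E) R₁ \ closure (ball (s • e) R₀)) =
      sphere 0 R₁ ∪ sphere (s • e) R₀ := by
  have hR₁ : 0 < R₁ := by linarith
  have hcl : closure (ball (s • e) R₀) = closedBall (s • e) R₀ := closure_ball _ hR₀.ne'
  have hsub : closedBall (s • e) R₀ ⊆ ball (0 : E) R₁ := by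
    apply closedBall_subset_ball'
    simp [norm_smul, he, abs_of_pos hs]; linarith
  have hop : IsOpen (ball (0 : E) R₁ \ closedBall (s • e) R₀) := isOpen_ball.sdiff isClosed_closedBall
  rw [hcl, hop.frontier_eq]
  ext x
  constructor
  · rintro ⟨h1, h2⟩
    have hx1 : x ∈ closedBall (0 : E) R₁ :=
      closure_minimal (diff_subset.trans ball_subset_closedBall) isClosed_closedBall h1
    have hx2 : x ∈ (ball (s • e) R₀)ᶜ :=
      closure_minimal (fun y hy => fun h => hy.2 (ball_subset_closedBall h))
        isOpen_ball.isClosed_compl h1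
    by_cases hx3 : x ∈ ball (0 : E) R₁
    · right
      have : x ∈ closedBall (s • e) R₀ := by
        by_contra h; exact h2 ⟨hx3, h⟩
      simp only [mem_closedBall, mem_compl_iff, mem_ball, not_lt, mem_sphere] at *
      exact le_antisymm this hx2
    · left
      simp only [mem_closedBall, mem_ball, not_lt, mem_sphere] at *
      exact le_antisymm hx1 hx3
  · rintro (h | h)
    · have hnb : x ∉ ball (0 : E) R₁ := by simp at h ⊢; linarith
      refine ⟨?_, fun h' => hnb h'.1⟩
      have h1 : x ∈ closure (ball (0 : E) R₁) := by
        rw [closure_ball _ hR₁.ne']; exact sphere_subset_closedBall h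
      have h2 : x ∈ (closedBall (s • e) R₀)ᶜ := fun h' => hnb (hsub h')
      rw [diff_eq, inter_comm]
      exact isClosed_closedBall.isOpen_compl.inter_closure ⟨h2, h1⟩
    · have hc : x ∈ closedBall (s • e) R₀ := sphere_subset_closedBall h
      refine ⟨?_, fun h' => h'.2 hc⟩
      have h1 : x ∈ closure ((closedBall (s • e) R₀)ᶜ) := by
        rw [closure_compl, interior_closedBall _ hR₀.ne']
        intro h'
        exact absurd (mem_sphere.1 h) (ne_of_lt (mem_ball.1 h'))
      exact isOpen_ball.inter_closure ⟨hsub hc, h1⟩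

theorem aux_perim (n : ℕ) (e : E) (he : ‖e‖ = 1) (R₀ R₁ s t : ℝ) (hR₀ : 0 < R₀)
    (hs : 0 < s) (hsR : s + R₀ < R₁) (hst : s ≤ t) :
    μH[(n : ℝ)] (frontier ((ball (0 : E) R₁ \ closure (ball (s • e) R₀)) ∩ {x | ⟪e, x⟫ < t})) +
      μH[(n : ℝ)] {x : E | ⟪e, x⟫ = t ∧ ‖x - s • e‖ < R₀} ≤
    μH[(n : ℝ)] (frontier (ball (0 : E) R₁ \ closure (ball (s • e) R₀))) := by
  rw [aux_frontier e he R₀ R₁ s hR₀ hs hsR]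
  have hcl : closure (ball (s • e) R₀) = closedBall (s • e) R₀ := closure_ball _ hR₀.ne'
  have hsub : closedBall (s • e) R₀ ⊆ ball (0 : E) R₁ := by
    apply closedBall_subset_ball'
    simp [norm_smul, he, abs_of_pos hs]; linarith
  rw [hcl]
  have hlt : IsOpen {x : E | ⟪e, x⟫ < t} := isOpen_lt (by fun_prop) continuous_const
  have hle : IsClosed {x : E | ⟪e, x⟫ ≤ t} := isClosed_le (by fun_prop) continuous_const
  have hgt : IsOpen {x : E | t < ⟪e, x⟫} := isOpen_lt continuous_const (by fun_prop)
  have heq : IsClosed {x : E | ⟪e, x⟫ = t} := isClosed_eq (by fun_prop) continuous_const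
  set D := (ball (0 : E) R₁ \ closedBall (s • e) R₀) ∩ {x | ⟪e, x⟫ < t} with hD
  have hop : IsOpen D := (isOpen_ball.sdiff isClosed_closedBall).inter hlt
  set S₁ := sphere (0 : E) R₁
  set S₀ := sphere (s • e) R₀
  set T := {x : E | t < ⟪e, x⟫}
  set F := {x : E | ⟪e, x⟫ = t ∧ ‖x - s • e‖ < R₀}
  set G := {x : E | ⟪e, x⟫ = t ∧ ‖x - (0 : ℝ) • e‖ < R₁}
  have hfr : frontier D ⊆ (S₁ \ T) ∪ (S₀ \ T) ∪ (G \ F) := by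
    rw [hop.frontier_eq]
    rintro x ⟨h1, h2⟩
    have hx1 : x ∈ closedBall (0 : E) R₁ :=
      closure_minimal (fun y hy => ball_subset_closedBall hy.1.1) isClosed_closedBall h1
    have hx2 : x ∈ (ball (s • e) R₀)ᶜ :=
      closure_minimal (fun y hy => fun h => hy.1.2 (ball_subset_closedBall h))
        isOpen_ball.isClosed_compl h1
    have hx3 : ⟪e, x⟫ ≤ t :=
      closure_minimal (t := {x : E | ⟪e, x⟫ ≤ t})
        (fun y hy => le_of_lt (show ⟪e, y⟫ < t from hy.2)) hle h1
    have hxT : x ∉ T := fun h => absurd h (not_lt.2 hx3)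
    by_cases ha : x ∈ S₁
    · exact Or.inl (Or.inl ⟨ha, hxT⟩)
    by_cases hb : x ∈ S₀
    · exact Or.inl (Or.inr ⟨hb, hxT⟩)
    right
    have hx1' : x ∈ ball (0 : E) R₁ := lt_of_le_of_ne hx1 ha
    have hx2' : x ∉ closedBall (s • e) R₀ := by
      intro h
      exact hb (le_antisymm h (not_lt.1 hx2))
    have hxt : ⟪e, x⟫ = t := by
      by_contra hne
      exact h2 ⟨⟨hx1', hx2'⟩, lt_of_le_of_ne hx3 hne⟩
    refine ⟨⟨hxt, by simpa using hx1'⟩, fun h => hx2 ?_⟩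
    rw [mem_ball_iff_norm]; exact h.2
  have hTm : MeasurableSet T := hgt.measurableSet
  have hFm : MeasurableSet F := by
    have : F = {x : E | ⟪e, x⟫ = t} ∩ ball (s • e) R₀ := by
      ext x; simp [F, dist_eq_norm]
    rw [this]; exact heq.measurableSet.inter measurableSet_ball
  have hFG : F ⊆ G := by
    rintro x ⟨h1, h2⟩
    refine ⟨h1, ?_⟩
    have : x ∈ ball (0 : E) R₁ := hsub (ball_subset_closedBall (mem_ball_iff_norm.2 h2))
    simpa using this
  have hdisj : Disjoint S₁ S₀ := by
    rw [Set.disjoint_left]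
    intro x h1 h2
    have := hsub (sphere_subset_closedBall h2)
    simp [S₁] at h1 this
    linarith
  have hS₀m : MeasurableSet S₀ := isClosed_sphere.measurableSet
  have c1 : μH[(n : ℝ)] G ≤ μH[(n : ℝ)] (S₁ ∩ T) := by
    have hz : S₁ = sphere ((0 : ℝ) • e) R₁ := by rw [zero_smul]
    rw [hz]
    exact aux_cap n e he 0 t R₁ (hs.le.trans hst)
  set μ : Measure E := μH[(n : ℝ)]
  calc μ (frontier D) + μ F ≤ (μ (S₁ \ T) + μ (S₀ \ T) + μ (G \ F)) + μ F := by
        gcongr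
        exact (measure_mono hfr).trans ((measure_union_le _ _).trans
          (by gcongr; exact measure_union_le _ _))
    _ = μ (S₁ \ T) + μ (S₀ \ T) + (μ (G ∩ F) + μ (G \ F)) := by
        rw [inter_eq_right.2 hFG]; ring
    _ = μ (S₁ \ T) + μ (S₀ \ T) + μ G := by rw [measure_inter_add_diff _ hFm]
    _ ≤ μ (S₁ \ T) + μ S₀ + μ (S₁ ∩ T) := by
        gcongr; exact diff_subset
    _ = (μ (S₁ ∩ T) + μ (S₁ \ T)) + μ S₀ := by ring
    _ = μ S₁ + μ S₀ := by rw [measure_inter_add_diff _ hTm]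
    _ = μ (S₁ ∪ S₀) := (measure_union hdisj hS₀m).symm

end Aux

theorem aux_ennreal (PD F P VO VD v : ℝ≥0∞) (h1 : PD + F ≤ P) (hP : P ≠ ∞) (h2 : VO ≤ VD + v)
    (h3 : P * v < F * VO) (hVD : VD ≠ ∞) : PD * VO < P * VD := by
  have h4 : P * VD ≠ ∞ := ENNReal.mul_ne_top hP hVD
  have h5 : PD * VO + F * VO < P * VD + F * VO := by
    calc PD * VO + F * VO = (PD + F) * VO := by ring
      _ ≤ P * (VD + v) := by gcongr
      _ = P * VD + P * v := by ring
      _ < P * VD + F * VO := ENNReal.add_lt_add_left h4 h3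
  exact lt_of_add_lt_add_right h5

theorem aux_e1_inner (n : ℕ) (x : EuclideanSpace ℝ (Fin (n + 1))) : ⟪e1 (n + 1), x⟫ = x 0 := by
  simp [e1, PiLp.inner_apply, Fin.sum_univ_succ]

theorem aux_e1_norm (n : ℕ) : ‖e1 (n + 1)‖ = 1 := by
  simp [e1, EuclideanSpace.norm_eq, Fin.sum_univ_succ]

theorem aux_capvol (n : ℕ) (R t r : ℝ) (hr : 0 ≤ r) (ht : 0 ≤ t)
    (h : R ^ 2 - t ^ 2 ≤ r ^ 2) :
    volume (ball (0 : EuclideanSpace ℝ (Fin (n + 1))) R ∩ {x | t ≤ x 0}) ≤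
      ENNReal.ofReal (R - t) * ENNReal.ofReal (2 * r) ^ n := by
  let I : Fin (n + 1) → Set ℝ := fun i => if i = 0 then Icc t R else Icc (-r) r
  have hI : volume (Set.pi univ I) = ENNReal.ofReal (R - t) * ENNReal.ofReal (2 * r) ^ n := by
    rw [volume_pi_pi, Fin.prod_univ_succ]
    have : r - -r = 2 * r := by ring
    simp [I, Fin.succ_ne_zero, this]
  have hIm : MeasurableSet (Set.pi univ I) := by
    apply MeasurableSet.univ_pi
    intro i
    simp only [I]; split_ifs <;> exact measurableSet_Icc
  rw [← hI, ← (PiLp.volume_preserving_ofLp (Fin (n + 1))).measure_preimage hIm.nullMeasurableSet]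
  apply measure_mono
  rintro x ⟨hx, hxt⟩
  simp only [mem_setOf_eq] at hxt
  have hxR : ‖x‖ < R := by simpa using hx
  have hRpos : 0 ≤ R := (norm_nonneg x).trans hxR.le
  have hsum : ‖x‖ ^ 2 = x 0 ^ 2 + ∑ i : Fin n, x i.succ ^ 2 := by
    rw [EuclideanSpace.real_norm_sq_eq, Fin.sum_univ_succ]
  have hx2 : ‖x‖ ^ 2 < R ^ 2 := pow_lt_pow_left₀ hxR (norm_nonneg _) (by norm_num)
  have hnn : 0 ≤ ∑ i : Fin n, x i.succ ^ 2 := Finset.sum_nonneg (fun i _ => sq_nonneg _)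
  simp only [mem_preimage, Set.mem_pi, mem_univ, true_implies]
  intro i
  refine Fin.cases ?_ (fun j => ?_) i
  · simp only [I, if_true]
    exact ⟨hxt, by nlinarith⟩
  · simp only [I, Fin.succ_ne_zero, if_false]
    have hj : x j.succ ^ 2 ≤ ∑ i : Fin n, x i.succ ^ 2 :=
      Finset.single_le_sum (f := fun i : Fin n => x i.succ ^ 2) (fun i _ => sq_nonneg _)
        (Finset.mem_univ j)
    have : x j.succ ^ 2 ≤ r ^ 2 := by nlinarith
    exact abs_le.1 (abs_le_of_sq_le_sq this hr)

theorem stmt19 (N : ℕ) (hN : 2 ≤ N) (R₀ R₁ : ℝ) (hR₀ : 0 < R₀) (hR : R₀ < R₁) :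
    ∃ s ∈ Set.Ioo 0 (R₁ - R₀), ∃ D : Set (EuclideanSpace ℝ (Fin N)),
      IsOpen D ∧ D.Nonempty ∧ D ⊆ Om N R₀ R₁ s ∧
      μH[(N : ℝ) - 1] (frontier D) * volume (Om N R₀ R₁ s) <
        μH[(N : ℝ) - 1] (frontier (Om N R₀ R₁ s)) * volume D := by
  obtain ⟨n, rfl⟩ : ∃ n, N = n + 1 := ⟨N - 1, by omega⟩
  have hd : ((n + 1 : ℕ) : ℝ) - 1 = (n : ℝ) := by push_cast; ring
  rw [hd]
  have hR₁ : 0 < R₁ := hR₀.trans hR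
  set e := e1 (n + 1) with hedef
  have he : ‖e‖ = 1 := aux_e1_norm n
  have hfin : Module.finrank ℝ (EuclideanSpace ℝ (Fin (n + 1))) = n + 1 := by simp
  haveI := aux_haar n hfin e he
  set M := μH[(n : ℝ)] (ball (0 : (ℝ ∙ e)ᗮ) 1) with hM
  have hM0 : 0 < M := measure_ball_pos _ _ one_pos
  have hMt : M ≠ ∞ := measure_ball_lt_top.ne
  set P := μH[(n : ℝ)] (sphere (0 : EuclideanSpace ℝ (Fin (n + 1))) R₁) +
    μH[(n : ℝ)] (sphere (0 : EuclideanSpace ℝ (Fin (n + 1))) R₀) with hP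
  have hPt : P ≠ ∞ := ENNReal.add_ne_top.2
    ⟨(aux_sphere n hfin 0 R₁ hR₁).ne, (aux_sphere n hfin 0 R₀ hR₀).ne⟩
  set V := volume (ball (0 : EuclideanSpace ℝ (Fin (n + 1))) R₁) -
    volume (closedBall (0 : EuclideanSpace ℝ (Fin (n + 1))) R₀) with hV
  have hVt : V ≠ ∞ := ENNReal.sub_ne_top measure_ball_lt_top.ne
  have hV0 : 0 < V := by
    rw [hV, tsub_pos_iff_lt, Measure.addHaar_closedBall _ _ hR₀.le, Measure.addHaar_ball _ _ hR₁.le]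
    apply ENNReal.mul_lt_mul_left (measure_ball_pos _ _ one_pos).ne' measure_ball_lt_top.ne
    rw [ENNReal.ofReal_lt_ofReal_iff (by positivity)]
    exact pow_lt_pow_left₀ hR hR₀.le (by simp)
  set a := Real.sqrt (R₀ / 2) with ha
  set b := Real.sqrt (2 * R₁) with hb
  have ha0 : 0 < a := Real.sqrt_pos.2 (by positivity)
  have hb0 : 0 < b := Real.sqrt_pos.2 (by positivity)
  have hp0 : 0 ≤ P.toReal := ENNReal.toReal_nonneg
  have hm0 : 0 < M.toReal := ENNReal.toReal_pos hM0.ne' hMt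
  have hv0 : 0 < V.toReal := ENNReal.toReal_pos hV0.ne' hVt
  obtain ⟨h, hh0, hhR, hhd, hhs⟩ : ∃ h : ℝ, 0 < h ∧ h < R₀ ∧ h < R₁ - R₀ ∧
      P.toReal * (h * (2 * b) ^ n) < a ^ n * M.toReal * V.toReal := by
    have hc : Tendsto (fun h : ℝ => P.toReal * (h * (2 * b) ^ n)) (𝓝[>] 0) (𝓝 0) := by
      have : Continuous (fun h : ℝ => P.toReal * (h * (2 * b) ^ n)) := by fun_prop
      have h1 := this.tendsto 0
      simp only [zero_mul, mul_zero] at h1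
      exact h1.mono_left nhdsWithin_le_nhds
    have e1' := hc.eventually_lt_const (show 0 < a ^ n * M.toReal * V.toReal by positivity)
    have e2 : ∀ᶠ h : ℝ in 𝓝[>] 0, h < R₀ := nhdsWithin_le_nhds (Iio_mem_nhds hR₀)
    have e3 : ∀ᶠ h : ℝ in 𝓝[>] 0, h < R₁ - R₀ :=
      nhdsWithin_le_nhds (Iio_mem_nhds (by linarith))
    have e4 : ∀ᶠ h : ℝ in 𝓝[>] 0, 0 < h := self_mem_nhdsWithin
    obtain ⟨h, k1, k2, k3, k4⟩ := (e4.and (e2.and (e3.and e1'))).exists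
    exact ⟨h, k1, k2, k3, k4⟩
  set q := Real.sqrt h with hq
  have hq0 : 0 < q := Real.sqrt_pos.2 hh0
  have hq2 : q ^ 2 = h := Real.sq_sqrt hh0.le
  have ha2 : a ^ 2 = R₀ / 2 := Real.sq_sqrt (by positivity)
  have hb2 : b ^ 2 = 2 * R₁ := Real.sq_sqrt (by positivity)
  set s := R₁ - R₀ - h / 2 with hs
  set t := R₁ - h with ht
  have hs0 : 0 < s := by linarith
  have hsR : s + R₀ < R₁ := by linarith
  have hst : s ≤ t := by linarith
  have hOm : Om (n + 1) R₀ R₁ s = ball 0 R₁ \ closure (ball (s • e) R₀) := rfl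
  set D := (ball 0 R₁ \ closure (ball (s • e) R₀)) ∩ {x | ⟪e, x⟫ < t} with hD
  have hDo : IsOpen D := (isOpen_ball.sdiff isClosed_closure).inter
    (isOpen_lt (by fun_prop) continuous_const)
  have hper := aux_perim n e he R₀ R₁ s t hR₀ hs0 hsR hst
  have hdisc := aux_disc n hfin e he s t R₀ (a * q) (by positivity) hR₀ (by
    rw [mul_pow, ha2, hq2, hs, ht]; nlinarith)
  have hfr : μH[(n : ℝ)] (frontier (Om (n + 1) R₀ R₁ s)) = P := by
    rw [hOm, aux_frontier e he R₀ R₁ s hR₀ hs0 hsR, measure_union _ isClosed_sphere.measurableSet,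
      hP]
    · congr 1
      have htr : sphere (s • e) R₀ = (fun x => s • e + x) '' sphere 0 R₀ := by
        ext x; simp [mem_sphere_iff_norm, sub_eq_neg_add]
      rw [htr, (isometry_add_left (s • e)).hausdorffMeasure_image (Or.inl (Nat.cast_nonneg n))]
    · rw [Set.disjoint_left]
      intro x h1 h2
      have hsub : closedBall (s • e) R₀ ⊆ ball (0 : EuclideanSpace ℝ (Fin (n + 1))) R₁ := by
        apply closedBall_subset_ball'
        simp [norm_smul, he, abs_of_pos hs0]; linarith
      have := hsub (sphere_subset_closedBall h2)
      simp at h1 this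
      linarith
  have hvol : V ≤ volume (Om (n + 1) R₀ R₁ s) := by
    rw [hOm, closure_ball _ hR₀.ne', hV, ← Measure.addHaar_closedBall_center volume (s • e) R₀]
    exact le_measure_diff
  have hcap := aux_capvol n R₁ t (b * q) (by positivity) (by linarith) (by
    rw [mul_pow, hb2, hq2, ht]; nlinarith)
  have hVD : volume D ≠ ∞ :=
    ((measure_mono (fun x hx => hx.1.1)).trans_lt
      (measure_ball_lt_top (x := (0 : EuclideanSpace ℝ (Fin (n + 1)))) (r := R₁))).ne
  have hOD : volume (Om (n + 1) R₀ R₁ s) ≤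
      volume D + ENNReal.ofReal (R₁ - t) * ENNReal.ofReal (2 * (b * q)) ^ n := by
    refine le_trans (measure_mono ?_) ((measure_union_le _ _).trans (by gcongr))
    intro x hx
    by_cases hxt : ⟪e, x⟫ < t
    · exact Or.inl ⟨hx, hxt⟩
    · refine Or.inr ⟨hx.1, ?_⟩
      rw [hedef, aux_e1_inner] at hxt
      exact not_lt.1 hxt
  have key : μH[(n : ℝ)] (frontier D) * volume (Om (n + 1) R₀ R₁ s) <
      μH[(n : ℝ)] (frontier (Om (n + 1) R₀ R₁ s)) * volume D := by
    refine aux_ennreal _ (ENNReal.ofReal ((a * q) ^ n) * M) _ _ _ _ ?_ (hfr ▸ hPt) hOD ?_ hVD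
    · exact le_trans (by gcongr) hper
    · rw [hfr]
      refine lt_of_lt_of_le ?_ (mul_le_mul_right hvol _)
      rw [← ENNReal.ofReal_toReal hPt, ← ENNReal.ofReal_toReal hVt, ← ENNReal.ofReal_toReal hMt,
        ← ENNReal.ofReal_pow (by positivity), ← ENNReal.ofReal_mul (by linarith),
        ← ENNReal.ofReal_mul hp0, ← ENNReal.ofReal_mul (by positivity),
        ← ENNReal.ofReal_mul (by positivity), ENNReal.ofReal_lt_ofReal_iff (by positivity)]
      have h1 : P.toReal * ((R₁ - t) * (2 * (b * q)) ^ n) =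
          P.toReal * (h * (2 * b) ^ n) * q ^ n := by
        rw [ht]; simp only [mul_pow]; ring
      have h2 : (a * q) ^ n * M.toReal * V.toReal = a ^ n * M.toReal * V.toReal * q ^ n := by
        rw [mul_pow]; ring
      rw [h1, h2]
      exact mul_lt_mul_of_pos_right hhs (by positivity)
  refine ⟨s, ⟨hs0, by linarith⟩, D, hDo, ?_, inter_subset_left, key⟩
  rw [nonempty_iff_ne_empty]
  intro hemp
  rw [hemp] at key
  simp at key
end
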